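/- arXiv:2407.06364 — 2 statements merged into one kernel-verified Lean document; each statement's English description precedes it below -/
import Mathlib

section
/- Let T be a tensorly faithful Wakamatsu tilting (S,R)-bimodule, where R is right Noetherian and S is left coherent. Assume that the injective dimension of T as a right R-module and the injective dimension of T as a left S-module are both finite. Then for every right R-module M the following are equivalent: (i) M belongs to the Bass class ℬ_T(R); (ii) the Gorenstein injective dimension Gid(M) is finite. -/
open Function MulOpposite

universe u

noncomputable section

/-! ## Chain conditions -/

/-- A ring is right coherent if every finitely generated right ideal is finitely presented. -/
def IsRightCoherentRing (R : Type u) [Ring R] : Prop :=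
  ∀ I : Submodule Rᵐᵒᵖ R, I.FG → Module.FinitePresentation Rᵐᵒᵖ I

/-- A ring is left coherent if every finitely generated left ideal is finitely presented. -/
def IsLeftCoherentRing (S : Type u) [Ring S] : Prop :=
  ∀ I : Submodule S S, I.FG → Module.FinitePresentation S I

/-- A ring is right Noetherian if every right ideal is finitely generated. -/
def IsRightNoetherianRing (R : Type u) [Ring R] : Prop :=
  ∀ I : Submodule Rᵐᵒᵖ R, I.FG

/-! ## The tensor product `N ⊗_S T` of a right `S`-module `N` with a left `S`-module `T` -/

section MTensor

variable (S : Type u) [Ring S]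
variable (N : Type u) [AddCommGroup N] [Module Sᵐᵒᵖ N]
variable (T : Type u) [AddCommGroup T] [Module S T]

/-- The subgroup of balancing relations defining `N ⊗_S T` as a quotient of `T ⊗_ℤ N`. -/
def mtRel : AddSubgroup (TensorProduct ℤ T N) :=
  AddSubgroup.closure
    {x | ∃ (s : S) (t : T) (n : N), x = (s • t) ⊗ₜ[ℤ] n - t ⊗ₜ[ℤ] (op s • n)}

/-- `MTensor S N T` is the tensor product `N ⊗_S T` of a right `S`-module `N` with a left
`S`-module `T`, realized as a quotient of `T ⊗_ℤ N`. -/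
def MTensor : Type u := TensorProduct ℤ T N ⧸ mtRel S N T

instance : AddCommGroup (MTensor S N T) :=
  inferInstanceAs (AddCommGroup (TensorProduct ℤ T N ⧸ mtRel S N T))

variable {S N T}

/-- `MTensor.mk n t` is the element `n ⊗ t` of `N ⊗_S T`. -/
def MTensor.mk (n : N) (t : T) : MTensor S N T := QuotientAddGroup.mk (t ⊗ₜ[ℤ] n)

section Map

variable {N' : Type u} [AddCommGroup N'] [Module Sᵐᵒᵖ N']

/-- Functoriality of `N ⊗_S T` in the right `S`-module variable `N`. -/
def MTensor.map (g : N →ₗ[Sᵐᵒᵖ] N') : MTensor S N T →+ MTensor S N' T :=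
  QuotientAddGroup.map _ _
    (LinearMap.lTensor T g.toAddMonoidHom.toIntLinearMap).toAddMonoidHom
    (by
      refine (AddSubgroup.closure_le _).2 ?_
      rintro x ⟨s, t, n, rfl⟩
      simp only [SetLike.mem_coe, AddSubgroup.mem_comap, LinearMap.toAddMonoidHom_coe,
        map_sub, LinearMap.lTensor_tmul, AddMonoidHom.coe_toIntLinearMap,
        LinearMap.toAddMonoidHom_coe, map_smul]
      exact AddSubgroup.subset_closure ⟨s, t, g n, rfl⟩)

end Map

section LMap

variable {T' : Type u} [AddCommGroup T'] [Module S T']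

/-- Functoriality of `N ⊗_S T` in the left `S`-module variable `T`. -/
def MTensor.lmap (h : T →ₗ[S] T') : MTensor S N T →+ MTensor S N T' :=
  QuotientAddGroup.map _ _
    (LinearMap.rTensor N h.toAddMonoidHom.toIntLinearMap).toAddMonoidHom
    (by
      refine (AddSubgroup.closure_le _).2 ?_
      rintro x ⟨s, t, n, rfl⟩
      simp only [SetLike.mem_coe, AddSubgroup.mem_comap, LinearMap.toAddMonoidHom_coe,
        map_sub, LinearMap.rTensor_tmul, AddMonoidHom.coe_toIntLinearMap, map_smul]
      exact AddSubgroup.subset_closure ⟨s, h t, n, rfl⟩)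

end LMap

section Bimod

variable (R : Type u) [Ring R] [Module Rᵐᵒᵖ T] [SMulCommClass S Rᵐᵒᵖ T]

instance MTensor.instSMul : SMul Rᵐᵒᵖ (MTensor S N T) :=
  ⟨fun ρ =>
    QuotientAddGroup.map _ _ (DistribMulAction.toAddMonoidHom (TensorProduct ℤ T N) ρ)
      (by
        refine (AddSubgroup.closure_le _).2 ?_
        rintro x ⟨s, t, n, rfl⟩
        simp only [SetLike.mem_coe, AddSubgroup.mem_comap,
          DistribMulAction.toAddMonoidHom_apply, smul_sub, TensorProduct.smul_tmul']
        exact AddSubgroup.subset_closure ⟨s, ρ • t, n, by rw [smul_comm s ρ t]⟩)⟩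

instance MTensor.instModule : Module Rᵐᵒᵖ (MTensor S N T) :=
  Function.Surjective.module Rᵐᵒᵖ (QuotientAddGroup.mk' (mtRel S N T))
    (QuotientAddGroup.mk'_surjective _) (fun _ _ => rfl)

theorem MTensor.smul_mk (ρ : Rᵐᵒᵖ) (n : N) (t : T) :
    ρ • (MTensor.mk n t : MTensor S N T) = MTensor.mk n (ρ • t) := by
  show QuotientAddGroup.mk (ρ • (t ⊗ₜ[ℤ] n)) = QuotientAddGroup.mk ((ρ • t) ⊗ₜ[ℤ] n)
  rw [TensorProduct.smul_tmul']

theorem MTensor.mk_add_right (n : N) (t t' : T) :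
    (MTensor.mk n (t + t') : MTensor S N T) = MTensor.mk n t + MTensor.mk n t' := by
  show QuotientAddGroup.mk _ = _
  rw [TensorProduct.add_tmul]
  rfl

/-- The natural map `θ_N : N → Hom_R(T, N ⊗_S T)`, `n ↦ (t ↦ n ⊗ t)`. -/
def MTensor.theta (n : N) : T →ₗ[Rᵐᵒᵖ] MTensor S N T where
  toFun t := MTensor.mk n t
  map_add' t t' := MTensor.mk_add_right n t t'
  map_smul' ρ t := (MTensor.smul_mk R ρ n t).symm

variable (S T N) in
/-- The natural map `θ_N : N → Hom_R(T, N ⊗_S T)` as a function. -/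
def MTensor.thetaFun : N → (T →ₗ[Rᵐᵒᵖ] MTensor S N T) := fun n => MTensor.theta R n

end Bimod

end MTensor

/-! ## The right `S`-module structure on `Hom_A(T, M)` induced by a left `S`-action on `T` -/

section HomModule

variable {B A : Type u} [Ring B] [Ring A]
variable {T : Type u} [AddCommGroup T] [Module A T] [Module B T] [SMulCommClass B A T]
variable {M : Type u} [AddCommGroup M] [Module A M]

instance homDomSMul : SMul Bᵐᵒᵖ (T →ₗ[A] M) :=
  ⟨fun b f =>
    { toFun := fun t => f (b.unop • t)
      map_add' := fun t t' => by
        show f (b.unop • (t + t')) = f (b.unop • t) + f (b.unop • t')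
        rw [smul_add, map_add]
      map_smul' := fun a t => by
        show f (b.unop • a • t) = a • f (b.unop • t)
        rw [smul_comm b.unop a t, map_smul] }⟩

@[simp] theorem homDomSMul_apply (b : Bᵐᵒᵖ) (f : T →ₗ[A] M) (t : T) :
    (b • f) t = f (b.unop • t) := rfl

instance homDomModule : Module Bᵐᵒᵖ (T →ₗ[A] M) where
  one_smul f := LinearMap.ext fun t => by simp
  mul_smul b b' f := LinearMap.ext fun t => by simp [mul_smul]
  smul_zero b := LinearMap.ext fun t => rfl
  smul_add b f g := LinearMap.ext fun t => rfl
  add_smul b b' f := LinearMap.ext fun t => by simp [add_smul]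
  zero_smul f := LinearMap.ext fun t => by simp

end HomModule

/-! ## The evaluation map `ν_M : Hom_R(T, M) ⊗_S T → M` -/

section Nu

variable (S R : Type u) [Ring S] [Ring R]
variable (T : Type u) [AddCommGroup T] [Module S T] [Module Rᵐᵒᵖ T] [SMulCommClass S Rᵐᵒᵖ T]
variable (M : Type u) [AddCommGroup M] [Module Rᵐᵒᵖ M]

/-- The evaluation map `ν_M : Hom_R(T, M) ⊗_S T → M`, `f ⊗ t ↦ f t`. -/
def MTensor.nuFun : MTensor S (T →ₗ[Rᵐᵒᵖ] M) T →+ M :=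
  QuotientAddGroup.lift _
    (TensorProduct.liftAddHom
      { toFun := fun t =>
          { toFun := fun f : T →ₗ[Rᵐᵒᵖ] M => f t
            map_zero' := rfl
            map_add' := fun f g => rfl }
        map_zero' := AddMonoidHom.ext fun f => f.map_zero
        map_add' := fun t t' => AddMonoidHom.ext fun f => f.map_add t t' }
      (fun z t f => by
        show f (z • t) = (z • f) t
        rw [map_zsmul, LinearMap.smul_apply]))
    (by
      refine (AddSubgroup.closure_le _).2 ?_
      rintro x ⟨s, t, f, rfl⟩
      simp only [SetLike.mem_coe, AddMonoidHom.mem_ker, map_sub,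
        TensorProduct.liftAddHom_tmul, AddMonoidHom.coe_mk, ZeroHom.coe_mk]
      show f (s • t) - (op s • f) t = 0
      rw [homDomSMul_apply]
      simp)

end Nu


/-! ## Resolutions and derived-functor vanishing -/

/-- The data of a nonnegatively graded chain complex `⋯ → P 1 → P 0 → X` of `A`-modules. -/
structure ResolutionData (A : Type u) [Ring A] (X : Type u) [AddCommGroup X] [Module A X] :
    Type (u + 1) where
  P : ℕ → Type u
  [instAdd : ∀ n, AddCommGroup (P n)]
  [instMod : ∀ n, Module A (P n)]
  d : ∀ n, P (n + 1) →ₗ[A] P n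
  ε : P 0 →ₗ[A] X

attribute [instance] ResolutionData.instAdd ResolutionData.instMod

/-- The property of being a projective resolution. -/
structure ResolutionData.IsProjResolution {A : Type u} [Ring A] {X : Type u} [AddCommGroup X]
    [Module A X] (Q : ResolutionData A X) : Prop where
  proj : ∀ n, Module.Projective A (Q.P n)
  surj : Function.Surjective Q.ε
  exact0 : Function.Exact (Q.d 0) Q.ε
  exactSucc : ∀ n, Function.Exact (Q.d (n + 1)) (Q.d n)

/-- `X` has a resolution by finitely generated projective `A`-modules. -/
def HasFGProjResolution (A : Type u) [Ring A] (X : Type u) [AddCommGroup X] [Module A X] : Prop :=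
  ∃ Q : ResolutionData A X, Q.IsProjResolution ∧ ∀ n, Module.Finite A (Q.P n)

/-- `Ext^i_A(X, Y) = 0` for all `i ≥ 1`: some (equivalently, any) projective resolution of `X`
has `Hom_A(-, Y)`-complex exact at all positive degrees. -/
def ExtVanishAll (A : Type u) [Ring A] (X Y : Type u) [AddCommGroup X] [Module A X]
    [AddCommGroup Y] [Module A Y] : Prop :=
  ∃ Q : ResolutionData A X, Q.IsProjResolution ∧
    ∀ j : ℕ, Function.Exact
      (fun f : Q.P j →ₗ[A] Y => f.comp (Q.d j))
      (fun f : Q.P (j + 1) →ₗ[A] Y => f.comp (Q.d (j + 1)))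

/-- `Ext^1_A(X, Y) = 0`: every short exact sequence `0 → Y → E → X → 0` splits. -/
def Ext1Vanishes (A : Type u) [Ring A] (X Y : Type u) [AddCommGroup X] [Module A X]
    [AddCommGroup Y] [Module A Y] : Prop :=
  ∀ (E : Type u) [AddCommGroup E] [Module A E] (i : Y →ₗ[A] E) (p : E →ₗ[A] X),
    Function.Injective i → Function.Surjective p → Function.Exact i p →
      ∃ s : X →ₗ[A] E, p.comp s = LinearMap.id

/-- `Tor^S_i(N, T) = 0` for all `i ≥ 1`: some (equivalently, any) projective resolution of the
right `S`-module `N` stays exact in positive degrees after applying `- ⊗_S T`. -/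
def TorVanishAll (S : Type u) [Ring S] (N : Type u) [AddCommGroup N] [Module Sᵐᵒᵖ N]
    (T : Type u) [AddCommGroup T] [Module S T] : Prop :=
  ∃ Q : ResolutionData Sᵐᵒᵖ N, Q.IsProjResolution ∧
    ∀ j : ℕ, Function.Exact
      (⇑(MTensor.map (T := T) (Q.d (j + 1))))
      (⇑(MTensor.map (T := T) (Q.d j)))

/-! ## Homological dimensions -/

/-- A surjection onto `M` from some module. -/
structure EpiOnto (A : Type u) [Ring A] (M : ModuleCat.{u} A) : Type (u + 1) where
  P : ModuleCat.{u} A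
  f : P →ₗ[A] M
  surj : Function.Surjective f

/-- An injection of `M` into some module. -/
structure MonoInto (A : Type u) [Ring A] (M : ModuleCat.{u} A) : Type (u + 1) where
  E : ModuleCat.{u} A
  f : M →ₗ[A] E
  inj : Function.Injective f

/-- `HasClassResolution A 𝒞 n M` says that there is an exact sequence
`0 → C_n → ⋯ → C_0 → M → 0` with all `C_i` in the class `𝒞`. -/
def HasClassResolution (A : Type u) [Ring A] (C : ModuleCat.{u} A → Prop) :
    ℕ → ModuleCat.{u} A → Prop
  | 0, M => C M
  | n + 1, M => ∃ e : EpiOnto A M, C e.P ∧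
      HasClassResolution A C n (ModuleCat.of A (LinearMap.ker e.f))

/-- `HasClassCoresolution A 𝒞 n M` says that there is an exact sequence
`0 → M → C^0 → ⋯ → C^n → 0` with all `C^i` in the class `𝒞`. -/
def HasClassCoresolution (A : Type u) [Ring A] (C : ModuleCat.{u} A → Prop) :
    ℕ → ModuleCat.{u} A → Prop
  | 0, M => C M
  | n + 1, M => ∃ m : MonoInto A M, C m.E ∧
      HasClassCoresolution A C n (ModuleCat.of A ((↥m.E) ⧸ LinearMap.range m.f))

/-- The projective dimension of `M` is at most `n`. -/
def ProjDimLE (A : Type u) [Ring A] (M : Type u) [AddCommGroup M] [Module A M] (n : ℕ) : Prop :=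
  HasClassResolution A (fun P => Module.Projective A P) n (ModuleCat.of A M)

/-- The injective dimension of `M` is at most `n`. -/
def InjDimLE (A : Type u) [Ring A] (M : Type u) [AddCommGroup M] [Module A M] (n : ℕ) : Prop :=
  HasClassCoresolution A (fun E => Module.Injective A E) n (ModuleCat.of A M)

/-- A right `S`-module `N` is flat if `N ⊗_S -` preserves injections of left `S`-modules. -/
def IsFlatRightModule (S : Type u) [Ring S] (N : Type u) [AddCommGroup N] [Module Sᵐᵒᵖ N] :
    Prop :=
  ∀ (X Y : Type u) [AddCommGroup X] [Module S X] [AddCommGroup Y] [Module S Y]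
    (g : X →ₗ[S] Y), Function.Injective g →
      Function.Injective (MTensor.lmap (N := N) g)

/-- The flat dimension of the right `S`-module `N` is at most `n`. -/
def FlatDimLE (S : Type u) [Ring S] (N : Type u) [AddCommGroup N] [Module Sᵐᵒᵖ N] (n : ℕ) :
    Prop :=
  HasClassResolution Sᵐᵒᵖ (fun P => IsFlatRightModule S P) n (ModuleCat.of Sᵐᵒᵖ N)

/-! ## Gorenstein homological algebra -/

/-- The data of a `ℤ`-indexed complex of `A`-modules. -/
structure ZComplex (A : Type u) [Ring A] : Type (u + 1) where
  P : ℤ → Type u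
  [instAdd : ∀ i, AddCommGroup (P i)]
  [instMod : ∀ i, Module A (P i)]
  d : ∀ i, P i →ₗ[A] P (i + 1)

attribute [instance] ZComplex.instAdd ZComplex.instMod

/-- Exactness of a `ℤ`-indexed complex. -/
def ZComplex.IsExact {A : Type u} [Ring A] (C : ZComplex A) : Prop :=
  ∀ i, Function.Exact (C.d i) (C.d (i + 1))

/-- A module is Gorenstein projective if it is a kernel of a totally acyclic complex of
projective modules. -/
def IsGorensteinProjective (A : Type u) [Ring A] (N : Type u) [AddCommGroup N] [Module A N] :
    Prop :=
  ∃ C : ZComplex A, (∀ i, Module.Projective A (C.P i)) ∧ C.IsExact ∧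
    (∀ (Q : Type u) [AddCommGroup Q] [Module A Q], Module.Projective A Q →
      ∀ i, Function.Exact
        (fun f : C.P (i + 1 + 1) →ₗ[A] Q => f.comp (C.d (i + 1)))
        (fun f : C.P (i + 1) →ₗ[A] Q => f.comp (C.d i))) ∧
    Nonempty (N ≃ₗ[A] LinearMap.ker (C.d 0))

/-- A module is Gorenstein injective if it is a kernel of a totally acyclic complex of
injective modules. -/
def IsGorensteinInjective (A : Type u) [Ring A] (M : Type u) [AddCommGroup M] [Module A M] :
    Prop :=
  ∃ C : ZComplex A, (∀ i, Module.Injective A (C.P i)) ∧ C.IsExact ∧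
    (∀ (I : Type u) [AddCommGroup I] [Module A I], Module.Injective A I →
      ∀ i, Function.Exact
        (fun f : I →ₗ[A] C.P i => (C.d i).comp f)
        (fun f : I →ₗ[A] C.P (i + 1) => (C.d (i + 1)).comp f)) ∧
    Nonempty (M ≃ₗ[A] LinearMap.ker (C.d 0))

/-- A right `S`-module is Gorenstein flat if it is a kernel of a complex of flat right
`S`-modules which stays exact after tensoring with any injective left `S`-module. -/
def IsGorensteinFlat (S : Type u) [Ring S] (N : Type u) [AddCommGroup N] [Module Sᵐᵒᵖ N] :
    Prop :=
  ∃ C : ZComplex Sᵐᵒᵖ, (∀ i, IsFlatRightModule S (C.P i)) ∧ C.IsExact ∧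
    (∀ (I : Type u) [AddCommGroup I] [Module S I], Module.Injective S I →
      ∀ i, Function.Exact
        (⇑(MTensor.map (T := I) (C.d i)))
        (⇑(MTensor.map (T := I) (C.d (i + 1))))) ∧
    Nonempty (N ≃ₗ[Sᵐᵒᵖ] LinearMap.ker (C.d 0))

/-- The Gorenstein projective dimension of `N` is at most `n`. -/
def GpdLE (A : Type u) [Ring A] (N : Type u) [AddCommGroup N] [Module A N] (n : ℕ) : Prop :=
  HasClassResolution A (fun P => IsGorensteinProjective A P) n (ModuleCat.of A N)

/-- The Gorenstein flat dimension of the right `S`-module `N` is at most `n`. -/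
def GfdLE (S : Type u) [Ring S] (N : Type u) [AddCommGroup N] [Module Sᵐᵒᵖ N] (n : ℕ) : Prop :=
  HasClassResolution Sᵐᵒᵖ (fun P => IsGorensteinFlat S P) n (ModuleCat.of Sᵐᵒᵖ N)

/-- The Gorenstein injective dimension of `M` is at most `n`. -/
def GidLE (A : Type u) [Ring A] (M : Type u) [AddCommGroup M] [Module A M] (n : ℕ) : Prop :=
  HasClassCoresolution A (fun E => IsGorensteinInjective A E) n (ModuleCat.of A M)

/-! ## Module classes `Prod(C)`, `Add(C)`, `add(C)` and (co)generators -/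

/-- `M` is a retract (equivalently, a direct summand up to isomorphism) of `P`. -/
def IsRetractOf (A : Type u) [Ring A] (M P : Type u) [AddCommGroup M] [Module A M]
    [AddCommGroup P] [Module A P] : Prop :=
  ∃ (f : M →ₗ[A] P) (g : P →ₗ[A] M), g.comp f = LinearMap.id

/-- `Prod(C)`: direct summands of direct products of copies of `C`. -/
def InProdClass (A : Type u) [Ring A] (C : Type u) [AddCommGroup C] [Module A C]
    (M : ModuleCat.{u} A) : Prop :=
  ∃ I : Type u, IsRetractOf A M (I → C)

/-- `Add(C)`: direct summands of direct sums of copies of `C`. -/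
def InAddClass (A : Type u) [Ring A] (C : Type u) [AddCommGroup C] [Module A C]
    (M : ModuleCat.{u} A) : Prop :=
  ∃ I : Type u, IsRetractOf A M (I →₀ C)

/-- `add(C)`: direct summands of finite direct sums of copies of `C`. -/
def InFinAddClass (A : Type u) [Ring A] (C : Type u) [AddCommGroup C] [Module A C]
    (M : ModuleCat.{u} A) : Prop :=
  ∃ k : ℕ, IsRetractOf A M (Fin k → C)

/-- `Q` is an injective cogenerator: `Q` is injective and every module embeds into a direct
product of copies of `Q`. -/
def IsInjectiveCogenerator (A : Type u) [Ring A] (Q : Type u) [AddCommGroup Q] [Module A Q] :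
    Prop :=
  Module.Injective A Q ∧
    ∀ (M : Type u) [AddCommGroup M] [Module A M],
      ∃ (I : Type u) (f : M →ₗ[A] (I → Q)), Function.Injective f

/-- `E` is the minimal injective cogenerator: it is an injective cogenerator which is a direct
summand of every injective cogenerator. -/
def IsMinimalInjectiveCogenerator (A : Type u) [Ring A] (E : Type u) [AddCommGroup E]
    [Module A E] : Prop :=
  IsInjectiveCogenerator A E ∧
    ∀ (Q : Type u) [AddCommGroup Q] [Module A Q],
      IsInjectiveCogenerator A Q → IsRetractOf A E Q

/-! ## Bimodules, homotheties, Wakamatsu tilting bimodules -/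

section Bimodules

variable (S R : Type u) [Ring S] [Ring R]
variable (T : Type u) [AddCommGroup T] [Module S T] [Module Rᵐᵒᵖ T] [SMulCommClass S Rᵐᵒᵖ T]

/-- The natural map `S → End(T_R)` given by the left `S`-action. -/
def leftHomothety : S → (T →ₗ[Rᵐᵒᵖ] T) := fun s =>
  { toFun := fun t => s • t
    map_add' := fun t t' => smul_add s t t'
    map_smul' := fun ρ t => smul_comm s ρ t }

/-- The natural map `R → End(_S T)` given by the right `R`-action. -/
def rightHomothety : R → (T →ₗ[S] T) := fun r =>
  { toFun := fun t => op r • t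
    map_add' := fun t t' => smul_add (op r) t t'
    map_smul' := fun s t => (smul_comm s (op r) t).symm }

/-- A Wakamatsu tilting `(S, R)`-bimodule: `T` admits resolutions by finitely generated
projectives on both sides, the natural maps `S → End(T_R)` and `R → End(_S T)` are
isomorphisms, and `Ext^i(T, T) = 0` on both sides for all `i ≥ 1`. -/
structure IsWakamatsuTilting : Prop where
  fgProjResR : HasFGProjResolution Rᵐᵒᵖ T
  fgProjResS : HasFGProjResolution S T
  bijS : Function.Bijective (leftHomothety S R T)
  bijR : Function.Bijective (rightHomothety S R T)
  extR : ExtVanishAll Rᵐᵒᵖ T T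
  extS : ExtVanishAll S T T

/-- An `(S, R)`-bimodule `T` is tensorly faithful if `T ⊗_R M = 0` implies `M = 0` and
`N ⊗_S T = 0` implies `N = 0`. -/
def IsTensorlyFaithful : Prop :=
  (∀ (M : Type u) [AddCommGroup M] [Module R M],
      Subsingleton (MTensor R T M) → Subsingleton M) ∧
  (∀ (N : Type u) [AddCommGroup N] [Module Sᵐᵒᵖ N],
      Subsingleton (MTensor S N T) → Subsingleton N)

/-- Membership in the Auslander class `𝒜_T(S)`. -/
structure InAuslanderClass (N : Type u) [AddCommGroup N] [Module Sᵐᵒᵖ N] : Prop where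
  torVanish : TorVanishAll S N T
  extVanish : ExtVanishAll Rᵐᵒᵖ T (MTensor S N T)
  thetaBij : Function.Bijective (MTensor.thetaFun S N T R)

/-- Membership in the Bass class `ℬ_T(R)`. -/
structure InBassClass (M : Type u) [AddCommGroup M] [Module Rᵐᵒᵖ M] : Prop where
  extVanish : ExtVanishAll Rᵐᵒᵖ T M
  torVanish : TorVanishAll S (T →ₗ[Rᵐᵒᵖ] M) T
  nuBij : Function.Bijective (MTensor.nuFun S R T M)

end Bimodules

/-! ## Cotilting and tilting modules -/

/-- A cotilting right `R`-module (Hügel–Coelho): finite injective dimension,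
`Ext^{i≥1}_R(Cᴵ, C) = 0` for every index set `I`, and there is a finite exact sequence
`0 → C_r → ⋯ → C_0 → Q → 0` with all `C_i ∈ Prod(C)` and `Q` an injective cogenerator. -/
structure IsCotilting (R : Type u) [Ring R] (C : Type u) [AddCommGroup C] [Module Rᵐᵒᵖ C] :
    Prop where
  finInjDim : ∃ n, InjDimLE Rᵐᵒᵖ C n
  extProdVanish : ∀ I : Type u, ExtVanishAll Rᵐᵒᵖ (I → C) C
  coresolution : ∃ (Q : ModuleCat.{u} Rᵐᵒᵖ) (r : ℕ),
    IsInjectiveCogenerator Rᵐᵒᵖ Q ∧ HasClassResolution Rᵐᵒᵖ (InProdClass Rᵐᵒᵖ C) r Q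

/-- An `n`-tilting right `R`-module (Miyashita). -/
structure IsNTilting (R : Type u) [Ring R] (T : Type u) [AddCommGroup T] [Module Rᵐᵒᵖ T]
    (n : ℕ) : Prop where
  fgProjRes : HasFGProjResolution Rᵐᵒᵖ T
  projDim : ProjDimLE Rᵐᵒᵖ T n
  extVanish : ExtVanishAll Rᵐᵒᵖ T T
  coresolution : HasClassCoresolution Rᵐᵒᵖ (InFinAddClass Rᵐᵒᵖ T) n (ModuleCat.of Rᵐᵒᵖ R)

/-- The data of a coresolution `0 → R → P 0 → P 1 → ⋯` of right `R`-modules. -/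
structure WakamatsuCoresolutionData (R : Type u) [Ring R] : Type (u + 1) where
  P : ℕ → Type u
  [instAdd : ∀ n, AddCommGroup (P n)]
  [instMod : ∀ n, Module Rᵐᵒᵖ (P n)]
  f0 : R →ₗ[Rᵐᵒᵖ] P 0
  d : ∀ n, P n →ₗ[Rᵐᵒᵖ] P (n + 1)

attribute [instance] WakamatsuCoresolutionData.instAdd WakamatsuCoresolutionData.instMod

/-- A Wakamatsu tilting right `R`-module: it admits a resolution by finitely generated
projective right `R`-modules, `Ext^{i≥1}_R(T, T) = 0`, and there is an exact sequence
`0 → R → T^0 → T^1 → ⋯` with each `T^i ∈ add(T)` and `Ext^1_R(Coker f, T) = 0` for every map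
`f` in this sequence. -/
def IsWakamatsuTiltingModule (R : Type u) [Ring R] (T : Type u) [AddCommGroup T]
    [Module Rᵐᵒᵖ T] : Prop :=
  HasFGProjResolution Rᵐᵒᵖ T ∧ ExtVanishAll Rᵐᵒᵖ T T ∧
    ∃ W : WakamatsuCoresolutionData R,
      Function.Injective W.f0 ∧ Function.Exact W.f0 (W.d 0) ∧
      (∀ n, Function.Exact (W.d n) (W.d (n + 1))) ∧
      (∀ n, InFinAddClass Rᵐᵒᵖ T (ModuleCat.of Rᵐᵒᵖ (W.P n))) ∧
      Ext1Vanishes Rᵐᵒᵖ ((W.P 0) ⧸ LinearMap.range W.f0) T ∧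
      (∀ n, Ext1Vanishes Rᵐᵒᵖ ((W.P (n + 1)) ⧸ LinearMap.range (W.d n)) T)

/-!
Passing to character modules turns the conditions on `Tor` and on the evaluation map in the
definition of the Bass class into conditions on `Ext` and on `Hom`, for which two out of three
along short exact sequences is a long exact sequence argument. Injective modules and the direct
sums `T^(I)` lie in the Bass class, and every Bass module is an epimorphic image of some `T^(I)`
with kernel again a Bass module.

If both injective dimensions of `T` are at most `n`, then `Ext^j(E, M) = 0` for `E` injective, `M`
in the Bass class and `j > n`, and `n`-th cosyzygies of `T^(I)` are injective. Hence the class of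
`n`-th cosyzygies of Bass modules is closed under cosyzygies, each of its members is a cosyzygy of
another member, and `Ext^1(E, -)` vanishes on it for `E` injective: its members are Gorenstein
injective.

Conversely, dimension shifting along a totally acyclic complex of injective modules shows that
Gorenstein injective modules are Bass modules. Faithfulness of `T` makes `Hom(T, -)` preserve
epimorphisms between Bass modules, so kernels of such epimorphisms are again Bass modules.
-/

/-! ## Short exact sequences and vanishing of `Ext` -/

/-- `0 → X₁ → X₂ → X₃ → 0` is a short exact sequence of `A`-modules, as a property of the two
maps; the modules stay unbundled. -/
structure IsShortExact {A : Type u} [Ring A] {X₁ X₂ X₃ : Type u}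
    [AddCommGroup X₁] [Module A X₁] [AddCommGroup X₂] [Module A X₂] [AddCommGroup X₃] [Module A X₃]
    (f : X₁ →ₗ[A] X₂) (g : X₂ →ₗ[A] X₃) : Prop where
  injective : Injective f
  surjective : Surjective g
  exact : Exact f g

/-- `Ext^i_A(X, Y) = 0`, for the derived `Ext` of the category of modules; the case `i = 0` reads
`Hom_A(X, Y) = 0`. -/
def ExtZero (A : Type u) [Ring A] (X Y : Type u) [AddCommGroup X] [Module A X]
    [AddCommGroup Y] [Module A Y] (i : ℕ) : Prop :=
  Subsingleton (CategoryTheory.Abelian.Ext (ModuleCat.of A X) (ModuleCat.of A Y) i)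

section ExtZero

open CategoryTheory Abelian

variable {A : Type u} [Ring A] {X Y W : Type u} [AddCommGroup X] [Module A X]
  [AddCommGroup Y] [Module A Y] [AddCommGroup W] [Module A W]

theorem ExtZero.eq_zero {i : ℕ} (h : ExtZero A X Y i)
    (e : Ext (ModuleCat.of A X) (ModuleCat.of A Y) i) : e = 0 :=
  Subsingleton.elim (h := h) e 0

theorem ExtZero.of_projective (hX : Module.Projective A X) (i : ℕ) : ExtZero A X Y (i + 1) := by
  have : Projective (ModuleCat.of A X) := (IsProjective.iff_projective X).1 hX
  exact Ext.subsingleton_of_projective _ _ _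

theorem ExtZero.of_injective (hY : Module.Injective A Y) (i : ℕ) : ExtZero A X Y (i + 1) := by
  have : CategoryTheory.Injective (ModuleCat.of A Y) :=
    Module.injective_object_of_injective_module A Y
  exact Ext.subsingleton_of_injective _ _ _

theorem ExtZero.of_leftInverse {s : W →ₗ[A] X} {p : X →ₗ[A] W} (hps : p.comp s = LinearMap.id)
    {i : ℕ} (h : ExtZero A X Y i) : ExtZero A W Y i := by
  refine subsingleton_of_forall_eq 0 fun x => ?_
  calc x = (Ext.mk₀ (ModuleCat.ofHom s)).comp
        ((Ext.mk₀ (ModuleCat.ofHom p)).comp x (zero_add i)) (zero_add i) := by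
        rw [Ext.mk₀_comp_mk₀_assoc, ← ModuleCat.ofHom_comp, hps]
        exact (Ext.mk₀_id_comp x).symm
    _ = 0 := by rw [h.eq_zero (Ext.comp _ _ _), Ext.comp_zero]

namespace IsShortExact

variable {X₁ X₂ X₃ : Type u} [AddCommGroup X₁] [Module A X₁] [AddCommGroup X₂] [Module A X₂]
  [AddCommGroup X₃] [Module A X₃] {f : X₁ →ₗ[A] X₂} {g : X₂ →ₗ[A] X₃}

/-- The short complex in the category of modules underlying a short exact sequence. -/
abbrev complex (h : IsShortExact f g) : ShortComplex (ModuleCat.{u} A) :=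
  ShortComplex.mk (ModuleCat.ofHom f) (ModuleCat.ofHom g)
    (ModuleCat.hom_ext h.exact.linearMap_comp_eq_zero)

theorem shortExact (h : IsShortExact f g) : h.complex.ShortExact where
  exact := (ShortComplex.ShortExact.moduleCat_exact_iff_function_exact _).2 h.exact
  mono_f := (ModuleCat.mono_iff_injective _).2 h.injective
  epi_g := (ModuleCat.epi_iff_surjective _).2 h.surjective

theorem extZero_left₃ (h : IsShortExact f g) {i : ℕ} (h₁ : ExtZero A X₁ W i)
    (h₂ : ExtZero A X₂ W (i + 1)) : ExtZero A X₃ W (i + 1) := by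
  refine subsingleton_of_forall_eq 0 fun x => ?_
  obtain ⟨y, rfl⟩ :=
    Ext.contravariant_sequence_exact₃ h.shortExact _ x (h₂.eq_zero _) (add_comm 1 i)
  rw [h₁.eq_zero y, Ext.comp_zero]

theorem extZero_left₁ (h : IsShortExact f g) {i : ℕ} (h₂ : ExtZero A X₂ W i)
    (h₃ : ExtZero A X₃ W (i + 1)) : ExtZero A X₁ W i := by
  refine subsingleton_of_forall_eq 0 fun x => ?_
  obtain ⟨y, rfl⟩ :=
    Ext.contravariant_sequence_exact₁ h.shortExact _ x (add_comm 1 i) (h₃.eq_zero _)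
  rw [h₂.eq_zero y, Ext.comp_zero]

theorem extZero_right₃ (h : IsShortExact f g) {i : ℕ} (h₁ : ExtZero A W X₁ (i + 1))
    (h₂ : ExtZero A W X₂ i) : ExtZero A W X₃ i := by
  refine subsingleton_of_forall_eq 0 fun x => ?_
  obtain ⟨y, rfl⟩ := Ext.covariant_sequence_exact₃ _ h.shortExact x rfl (h₁.eq_zero _)
  rw [h₂.eq_zero y, Ext.zero_comp]

theorem extZero_right₁ (h : IsShortExact f g) {i : ℕ} (h₂ : ExtZero A W X₂ (i + 1))
    (h₃ : ExtZero A W X₃ i) : ExtZero A W X₁ (i + 1) := by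
  refine subsingleton_of_forall_eq 0 fun x => ?_
  obtain ⟨y, rfl⟩ := Ext.covariant_sequence_exact₁ _ h.shortExact x (h₂.eq_zero _) rfl
  rw [h₃.eq_zero y, Ext.zero_comp]

theorem exists_extension (h : IsShortExact f g) (h₃ : ExtZero A X₃ W 1) (φ : X₁ →ₗ[A] W) :
    ∃ ψ : X₂ →ₗ[A] W, ψ.comp f = φ := by
  obtain ⟨y, hy⟩ := Ext.contravariant_sequence_exact₁ h.shortExact (ModuleCat.of A W)
    (Ext.mk₀ (ModuleCat.ofHom φ)) (add_zero 1) (h₃.eq_zero _)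
  obtain ⟨ψ, rfl⟩ := (Ext.mk₀_bijective _ _).2 y
  rw [Ext.mk₀_comp_mk₀] at hy
  exact ⟨ψ.hom, congrArg ModuleCat.Hom.hom ((Ext.mk₀_bijective _ _).1 hy)⟩

theorem exists_lift (h : IsShortExact f g) (h₁ : ExtZero A W X₁ 1) (φ : W →ₗ[A] X₃) :
    ∃ ψ : W →ₗ[A] X₂, g.comp ψ = φ := by
  obtain ⟨y, hy⟩ := Ext.covariant_sequence_exact₃ (ModuleCat.of A W) h.shortExact
    (Ext.mk₀ (ModuleCat.ofHom φ)) (zero_add 1) (h₁.eq_zero _)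
  obtain ⟨ψ, rfl⟩ := (Ext.mk₀_bijective _ _).2 y
  rw [Ext.mk₀_comp_mk₀] at hy
  exact ⟨ψ.hom, congrArg ModuleCat.Hom.hom ((Ext.mk₀_bijective _ _).1 hy)⟩

theorem extZero_one_of_exists_extension (h : IsShortExact f g) (h₂ : ExtZero A X₂ W 1)
    (hext : ∀ φ : X₁ →ₗ[A] W, ∃ ψ : X₂ →ₗ[A] W, ψ.comp f = φ) : ExtZero A X₃ W 1 := by
  refine subsingleton_of_forall_eq 0 fun x => ?_
  obtain ⟨y, rfl⟩ := Ext.contravariant_sequence_exact₃ h.shortExact _ x (h₂.eq_zero _) (add_zero 1)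
  obtain ⟨φ, rfl⟩ := (Ext.mk₀_bijective _ _).2 y
  obtain ⟨ψ, hψ⟩ := hext φ.hom
  have : φ = h.complex.f ≫ ModuleCat.ofHom ψ := ModuleCat.hom_ext hψ.symm
  rw [this, ← Ext.mk₀_comp_mk₀, h.shortExact.extClass_comp_assoc]

theorem extZero_one_of_exists_lift (h : IsShortExact f g) (h₂ : ExtZero A W X₂ 1)
    (hlift : ∀ φ : W →ₗ[A] X₃, ∃ ψ : W →ₗ[A] X₂, g.comp ψ = φ) : ExtZero A W X₁ 1 := by
  refine subsingleton_of_forall_eq 0 fun x => ?_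
  obtain ⟨y, rfl⟩ := Ext.covariant_sequence_exact₁ _ h.shortExact x (h₂.eq_zero _) (zero_add 1)
  obtain ⟨φ, rfl⟩ := (Ext.mk₀_bijective _ _).2 y
  obtain ⟨ψ, hψ⟩ := hlift φ.hom
  have : φ = ModuleCat.ofHom ψ ≫ h.complex.g := ModuleCat.hom_ext hψ.symm
  rw [this, ← Ext.mk₀_comp_mk₀, Ext.comp_assoc_of_second_deg_zero, h.shortExact.comp_extClass,
    Ext.comp_zero]

end IsShortExact

end ExtZero

/-! ## Resolutions -/

section Resolution

variable {A : Type u} [Ring A] {X Y Z W : Type u} [AddCommGroup X] [Module A X]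
  [AddCommGroup Y] [Module A Y] [AddCommGroup Z] [Module A Z] [AddCommGroup W] [Module A W]

theorem IsShortExact.ker_subtype {g : X →ₗ[A] Y} (hg : Surjective g) :
    IsShortExact (LinearMap.ker g).subtype g where
  injective := Subtype.val_injective
  surjective := hg
  exact := LinearMap.exact_subtype_ker_map g

theorem IsShortExact.range_mkQ {f : X →ₗ[A] Y} (hf : Injective f) :
    IsShortExact f (LinearMap.range f).mkQ where
  injective := hf
  surjective := Submodule.mkQ_surjective _
  exact := LinearMap.exact_map_mkQ_range f

theorem IsShortExact.subtype_mkQ (N : Submodule A Y) : IsShortExact N.subtype N.mkQ :=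
  ⟨N.injective_subtype, N.mkQ_surjective, LinearMap.exact_subtype_mkQ N⟩

theorem exists_desc_of_exact {f : X →ₗ[A] Y} {g : Y →ₗ[A] Z} (hfg : Exact f g)
    (hg : Surjective g) {φ : Y →ₗ[A] W} (hφ : φ.comp f = 0) : ∃ ψ : Z →ₗ[A] W, ψ.comp g = φ := by
  refine ⟨((LinearMap.range f).liftQ φ (LinearMap.range_le_ker_iff.2 hφ)).comp
    (hfg.linearEquivOfSurjective hg).symm.toLinearMap, ?_⟩
  ext y
  simp

theorem exists_lift_of_exact {f : X →ₗ[A] Y} {g : Y →ₗ[A] Z} (hfg : Exact f g)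
    (hf : Injective f) {φ : W →ₗ[A] Y} (hφ : g.comp φ = 0) : ∃ ψ : W →ₗ[A] X, f.comp ψ = φ := by
  have hrange (w : W) : φ w ∈ LinearMap.range f := (hfg _).1 (LinearMap.congr_fun hφ w)
  refine ⟨(LinearEquiv.ofInjective f hf).symm.toLinearMap.comp (φ.codRestrict _ hrange), ?_⟩
  ext w
  exact congrArg Subtype.val ((LinearEquiv.ofInjective f hf).apply_symm_apply ⟨φ w, hrange w⟩)

theorem IsShortExact.extZero_one_iff {f : X →ₗ[A] Y} {g : Y →ₗ[A] Z} (h : IsShortExact f g)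
    (hY : Module.Projective A Y) :
    ExtZero A Z W 1 ↔ ∀ φ : X →ₗ[A] W, ∃ ψ : Y →ₗ[A] W, ψ.comp f = φ :=
  ⟨fun h₃ => h.exists_extension h₃,
    h.extZero_one_of_exists_extension (ExtZero.of_projective hY 0)⟩

namespace ResolutionData

/-- The truncation of a projective resolution of `X`, resolving the first syzygy. -/
abbrev tail (Q : ResolutionData A X) (hQ : Q.IsProjResolution) :
    ResolutionData A (LinearMap.ker Q.ε) where
  P n := Q.P (n + 1)
  d n := Q.d (n + 1)
  ε := (Q.d 0).codRestrict _ hQ.exact0.apply_apply_eq_zero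

namespace IsProjResolution

variable {Q : ResolutionData A X}

theorem tail (hQ : Q.IsProjResolution) : (Q.tail hQ).IsProjResolution where
  proj n := hQ.proj (n + 1)
  surj := by
    rintro ⟨x, hx⟩
    obtain ⟨y, rfl⟩ := (hQ.exact0 x).1 hx
    exact ⟨y, rfl⟩
  exact0 x := by
    rw [← hQ.exactSucc 0 x]
    exact Subtype.ext_iff
  exactSucc n := hQ.exactSucc (n + 1)

theorem exact_zero_iff_exists_extension (hQ : Q.IsProjResolution) :
    Exact (fun f : Q.P 0 →ₗ[A] Y => f.comp (Q.d 0))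
        (fun f : Q.P 1 →ₗ[A] Y => f.comp (Q.d 1)) ↔
      ∀ φ : LinearMap.ker Q.ε →ₗ[A] Y,
        ∃ ψ : Q.P 0 →ₗ[A] Y, ψ.comp (LinearMap.ker Q.ε).subtype = φ := by
  set π := (Q.tail hQ).ε
  have hπ : Surjective π := hQ.tail.surj
  have hker : Exact (Q.d 1) π := hQ.tail.exact0
  constructor
  · intro h φ
    obtain ⟨ψ, hψ⟩ := (h (φ.comp π)).1 (by
      change (φ.comp π).comp (Q.d 1) = 0
      rw [LinearMap.comp_assoc, hker.linearMap_comp_eq_zero, LinearMap.comp_zero])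
    exact ⟨ψ, LinearMap.cancel_right hπ |>.1 hψ⟩
  · intro h f
    constructor
    · intro hf
      obtain ⟨φ, rfl⟩ := exists_desc_of_exact hker hπ hf
      obtain ⟨ψ, rfl⟩ := h φ
      exact ⟨ψ, rfl⟩
    · rintro ⟨ψ, rfl⟩
      change (ψ.comp (Q.d 0)).comp (Q.d 1) = 0
      rw [LinearMap.comp_assoc, (hQ.exactSucc 0).linearMap_comp_eq_zero, LinearMap.comp_zero]

theorem exact_iff_extZero (hQ : Q.IsProjResolution) (j : ℕ) :
    Exact (fun f : Q.P j →ₗ[A] Y => f.comp (Q.d j))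
        (fun f : Q.P (j + 1) →ₗ[A] Y => f.comp (Q.d (j + 1))) ↔ ExtZero A X Y (j + 1) := by
  have hker := IsShortExact.ker_subtype hQ.surj
  induction j generalizing X with
  | zero => rw [hQ.exact_zero_iff_exists_extension, hker.extZero_one_iff (hQ.proj 0)]
  | succ j ih =>
    refine (ih hQ.tail (IsShortExact.ker_subtype hQ.tail.surj)).trans ⟨fun h => ?_, fun h => ?_⟩
    · exact hker.extZero_left₃ h (ExtZero.of_projective (hQ.proj 0) (j + 1))
    · exact hker.extZero_left₁ (ExtZero.of_projective (hQ.proj 0) j) h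

end IsProjResolution

end ResolutionData

variable (A) in
/-- The free cover of a module `X` with the elements of `X` as basis. -/
abbrev freeCover (X : Type u) [AddCommGroup X] [Module A X] : (X →₀ A) →ₗ[A] X :=
  Finsupp.linearCombination A id

theorem freeCover_surjective : Surjective (freeCover A X) :=
  Finsupp.linearCombination_id_surjective A X

variable (A X) in
/-- The syzygies of `X` formed with the covers `freeCover`. -/
abbrev freeSyzygy : ℕ → ModuleCat.{u} A
  | 0 => ModuleCat.of A X
  | n + 1 => ModuleCat.of A (LinearMap.ker (freeCover A (freeSyzygy n)))

variable (A X) in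
/-- The free resolution of `X` spliced from the covers `freeCover` of its syzygies. -/
def freeResolution : ResolutionData A X where
  P n := freeSyzygy A X n →₀ A
  d n := (LinearMap.ker (freeCover A (freeSyzygy A X n))).subtype.comp
    (freeCover A (freeSyzygy A X (n + 1)))
  ε := freeCover A X

theorem exact_freeCover_ker :
    Exact
      ((LinearMap.ker (freeCover A X)).subtype.comp (freeCover A (LinearMap.ker (freeCover A X))))
      (freeCover A X) :=
  freeCover_surjective.comp_exact_iff_exact.2 (LinearMap.exact_subtype_ker_map _)

theorem freeResolution_isProjResolution : (freeResolution A X).IsProjResolution where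
  proj n := inferInstanceAs (Module.Projective A (freeSyzygy A X n →₀ A))
  surj := freeCover_surjective
  exact0 := exact_freeCover_ker
  exactSucc n := (Injective.comp_exact_iff_exact
    (LinearMap.ker (freeCover A (freeSyzygy A X n))).injective_subtype).2
      (exact_freeCover_ker (X := freeSyzygy A X (n + 1)))

theorem extVanishAll_iff_extZero : ExtVanishAll A X Y ↔ ∀ i, ExtZero A X Y (i + 1) := by
  constructor
  · rintro ⟨Q, hQ, h⟩ i
    exact (hQ.exact_iff_extZero i).1 (h i)
  · intro h
    exact ⟨_, freeResolution_isProjResolution,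
      fun j => (freeResolution_isProjResolution.exact_iff_extZero j).2 (h j)⟩

end Resolution

/-! ## Character modules -/

section Character

variable {G H K : Type u} [AddCommGroup G] [AddCommGroup H] [AddCommGroup K]

theorem character_ext {c c' : CharacterModule G} (h : ∀ x, c x = c' x) : c = c' :=
  DFunLike.ext _ _ h

@[simp] theorem character_add_apply (c c' : CharacterModule G) (x : G) :
    (c + c') x = c x + c' x := rfl

@[simp] theorem character_zero_apply (x : G) : (0 : CharacterModule G) x = 0 := rfl

/-- The map `H⁺ → G⁺` of character groups induced by a homomorphism `G → H`. -/
def charMap (f : G →+ H) : CharacterModule H →+ CharacterModule G :=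
  (CharacterModule.dual f.toIntLinearMap).toAddMonoidHom

@[simp] theorem charMap_apply (f : G →+ H) (c : CharacterModule H) (x : G) :
    charMap f c x = c (f x) := rfl

theorem charMap_surjective {f : G →+ H} (hf : Injective f) : Surjective (charMap f) :=
  CharacterModule.dual_surjective_of_injective f.toIntLinearMap hf

theorem charMap_bijective_iff {f : G →+ H} : Bijective (charMap f) ↔ Bijective f :=
  CharacterModule.dual_bijective_iff_bijective (f := f.toIntLinearMap)

theorem exists_charMap_eq_of_vanish_on_ker (f : G →+ H) {c : CharacterModule G}
    (hc : ∀ x, f x = 0 → c x = 0) : ∃ c' : CharacterModule H, charMap f c' = c := by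
  let c₁ : CharacterModule (G ⧸ f.ker) := QuotientAddGroup.lift f.ker c hc
  obtain ⟨c', hc'⟩ := charMap_surjective (QuotientAddGroup.kerLift_injective f) c₁
  exact ⟨c', character_ext fun x => DFunLike.congr_fun hc' (x : G ⧸ f.ker)⟩

theorem mem_range_of_forall_charMap_eq_zero (f : G →+ H) {y : H}
    (h : ∀ c : CharacterModule H, charMap f c = 0 → c y = 0) : y ∈ f.range := by
  refine (QuotientAddGroup.eq_zero_iff y).1 (CharacterModule.eq_zero_of_character_apply fun c => ?_)
  refine h (charMap (QuotientAddGroup.mk' f.range) c) (character_ext fun x => ?_)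
  have : (f x : H ⧸ f.range) = 0 := (QuotientAddGroup.eq_zero_iff _).2 ⟨x, rfl⟩
  exact (congrArg c this).trans (map_zero c)

theorem exact_charMap_iff {f : G →+ H} {g : H →+ K} :
    Exact (charMap g) (charMap f) ↔ Exact f g := by
  constructor
  · intro h y
    constructor
    · intro hy
      refine mem_range_of_forall_charMap_eq_zero f fun c hc => ?_
      obtain ⟨c', rfl⟩ := (h c).1 hc
      rw [charMap_apply, hy, map_zero]
    · rintro ⟨x, rfl⟩
      exact CharacterModule.eq_zero_of_character_apply fun c =>
        DFunLike.congr_fun (h.apply_apply_eq_zero c) x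
  · intro h c
    constructor
    · intro hc
      refine exists_charMap_eq_of_vanish_on_ker g fun y hy => ?_
      obtain ⟨x, rfl⟩ := (h y).1 hy
      exact DFunLike.congr_fun hc x
    · rintro ⟨c', rfl⟩
      refine character_ext fun x => ?_
      rw [charMap_apply, charMap_apply, h.apply_apply_eq_zero, map_zero, character_zero_apply]

variable {S : Type u} [Ring S] {X Y Z : Type u} [AddCommGroup X] [Module S X]
  [AddCommGroup Y] [Module S Y] [AddCommGroup Z] [Module S Z]

/-- The right `S`-module structure `(c s) x = c (s x)` on the character module of a left
`S`-module, for a possibly noncommutative ring `S`. -/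
instance characterOpModule : Module Sᵐᵒᵖ (CharacterModule X) where
  smul s := charMap (DistribSMul.toAddMonoidHom X s.unop)
  one_smul c := character_ext fun x => congrArg c (one_smul S x)
  mul_smul s s' c := character_ext fun x => congrArg c (mul_smul s'.unop s.unop x)
  smul_zero _ := map_zero _
  smul_add _ := map_add _
  add_smul s s' c := character_ext fun x =>
    (congrArg c (add_smul s.unop s'.unop x)).trans (map_add c _ _)
  zero_smul c := character_ext fun x => (congrArg c (zero_smul S x)).trans (map_zero c)

theorem character_op_smul_apply (s : Sᵐᵒᵖ) (c : CharacterModule X) (x : X) :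
    (s • c) x = c (s.unop • x) := rfl

/-- The map of character modules induced by an `S`-linear map, as an `Sᵐᵒᵖ`-linear map. -/
def charDual (f : X →ₗ[S] Y) : CharacterModule Y →ₗ[Sᵐᵒᵖ] CharacterModule X where
  toFun := charMap f.toAddMonoidHom
  map_add' := map_add _
  map_smul' s c := character_ext fun x => congrArg c (f.map_smul s.unop x).symm

theorem charDual_surjective {f : X →ₗ[S] Y} (hf : Injective f) : Surjective (charDual f) :=
  charMap_surjective (f := f.toAddMonoidHom) hf

theorem IsShortExact.isShortExact_charDual {f : X →ₗ[S] Y} {g : Y →ₗ[S] Z} (h : IsShortExact f g) :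
    IsShortExact (charDual g) (charDual f) where
  injective c c' hcc := character_ext fun z => by
    obtain ⟨y, rfl⟩ := h.surjective z
    exact DFunLike.congr_fun hcc y
  surjective := charDual_surjective h.injective
  exact := (exact_charMap_iff (f := f.toAddMonoidHom) (g := g.toAddMonoidHom)).2 h.exact

end Character

namespace MTensor

variable {S : Type u} [Ring S] {N : Type u} [AddCommGroup N] [Module Sᵐᵒᵖ N]
  {X : Type u} [AddCommGroup X] [Module S X]

theorem mk_add_left (n n' : N) (x : X) :
    (mk (n + n') x : MTensor S N X) = mk n x + mk n' x :=
  congrArg (QuotientAddGroup.mk (s := mtRel S N X)) (TensorProduct.tmul_add x n n')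

theorem mk_op_smul (s : Sᵐᵒᵖ) (n : N) (x : X) :
    (mk (s • n) x : MTensor S N X) = mk n (s.unop • x) := by
  symm
  refine QuotientAddGroup.eq_iff_sub_mem.2 ?_
  exact AddSubgroup.subset_closure ⟨s.unop, x, n, rfl⟩

theorem character_ext {c c' : CharacterModule (MTensor S N X)}
    (h : ∀ n x, c (mk n x) = c' (mk n x)) : c = c' := by
  refine DFunLike.ext _ _ fun z => ?_
  obtain ⟨z, rfl⟩ := QuotientAddGroup.mk_surjective z
  induction z using TensorProduct.induction_on with
  | zero => exact (map_zero c).trans (map_zero c').symm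
  | tmul x n => exact h n x
  | add a b ha hb =>
    exact (map_add c _ _).trans ((congrArg₂ _ ha hb).trans (map_add c' _ _).symm)

/-- The `S`-balanced map `N → X⁺` attached to a character of `N ⊗_S X`. -/
def curryCharacter (c : CharacterModule (MTensor S N X)) : N →ₗ[Sᵐᵒᵖ] CharacterModule X where
  toFun n := AddMonoidHom.mk' (fun x => c (mk n x)) fun x x' => by rw [mk_add_right, map_add]
  map_add' n n' := DFunLike.ext _ _ fun x => (congrArg c (mk_add_left n n' x)).trans (map_add c _ _)
  map_smul' s n := DFunLike.ext _ _ fun x => congrArg c (mk_op_smul s n x)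

/-- The character `n ⊗ x ↦ φ n x` of `N ⊗_S X`. -/
def uncurryCharacter (φ : N →ₗ[Sᵐᵒᵖ] CharacterModule X) : CharacterModule (MTensor S N X) :=
  QuotientAddGroup.lift _
    (TensorProduct.liftAddHom
      (AddMonoidHom.mk' (fun x => AddMonoidHom.mk' (fun n => φ n x) fun n n' => by
          rw [map_add, character_add_apply])
        fun x x' => AddMonoidHom.ext fun n => map_add (φ n) x x')
      fun z x n => by
        change φ n (z • x) = φ (z • n) x
        rw [map_zsmul, map_zsmul]
        rfl)
    (by
      refine (AddSubgroup.closure_le _).2 ?_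
      rintro _ ⟨s, x, n, rfl⟩
      change TensorProduct.liftAddHom _ _ _ = 0
      rw [map_sub, TensorProduct.liftAddHom_tmul, TensorProduct.liftAddHom_tmul, sub_eq_zero]
      exact (DFunLike.congr_fun (map_smul φ (op s) n) x).symm)

variable (S N X) in
/-- Tensor-hom adjunction `(N ⊗_S X)⁺ ≃ Hom_S(N, X⁺)`. -/
def charEquiv : CharacterModule (MTensor S N X) ≃+ (N →ₗ[Sᵐᵒᵖ] CharacterModule X) where
  toFun := curryCharacter
  invFun := uncurryCharacter
  left_inv _ := character_ext fun _ _ => rfl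
  right_inv _ := rfl
  map_add' _ _ := rfl

theorem subsingleton_of_forall_hom_eq_zero (h : ∀ φ : N →ₗ[Sᵐᵒᵖ] CharacterModule X, φ = 0) :
    Subsingleton (MTensor S N X) := by
  refine subsingleton_of_forall_eq 0 fun z => CharacterModule.eq_zero_of_character_apply fun c => ?_
  have hc : c = 0 := (charEquiv S N X).injective ((h _).trans (map_zero _).symm)
  rw [hc, character_zero_apply]

end MTensor

theorem torVanishAll_iff_extZero {S : Type u} [Ring S] {N : Type u} [AddCommGroup N]
    [Module Sᵐᵒᵖ N] {X : Type u} [AddCommGroup X] [Module S X] :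
    TorVanishAll S N X ↔ ∀ i, ExtZero Sᵐᵒᵖ N (CharacterModule X) (i + 1) := by
  rw [← extVanishAll_iff_extZero]
  refine exists_congr fun Q => and_congr_right fun _ => forall_congr' fun j => ?_
  rw [← exact_charMap_iff]
  exact (Exact.iff_of_ladder_addEquiv
    (g₁₂ := (LinearMap.lcomp ℤ (CharacterModule X) (Q.d j)).toAddMonoidHom)
    (g₂₃ := (LinearMap.lcomp ℤ (CharacterModule X) (Q.d (j + 1))).toAddMonoidHom)
    (e₁ := MTensor.charEquiv S (Q.P j) X) (e₂ := MTensor.charEquiv S (Q.P (j + 1)) X)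
    (e₃ := MTensor.charEquiv S (Q.P (j + 1 + 1)) X) rfl rfl).symm

/-! ## The Bass class through `Ext` and characters -/

section Hom

variable (S : Type u) {A : Type u} [Ring S] [Ring A]
  (T : Type u) [AddCommGroup T] [Module S T] [Module A T] [SMulCommClass S A T]
  {M₁ M₂ M₃ : Type u} [AddCommGroup M₁] [Module A M₁]
  [AddCommGroup M₂] [Module A M₂] [AddCommGroup M₃] [Module A M₃]

/-- Functoriality of the right `S`-module `Hom_A(T, M)` in `M`. -/
def homMap (g : M₁ →ₗ[A] M₂) : (T →ₗ[A] M₁) →ₗ[Sᵐᵒᵖ] (T →ₗ[A] M₂) where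
  toFun φ := g.comp φ
  map_add' φ ψ := LinearMap.comp_add φ ψ g
  map_smul' _ _ := rfl

variable {T} in
theorem IsShortExact.isShortExact_homMap {f : M₁ →ₗ[A] M₂} {g : M₂ →ₗ[A] M₃} (h : IsShortExact f g)
    (hlift : Surjective (homMap S T g)) : IsShortExact (homMap S T f) (homMap S T g) where
  injective _ _ hφψ := LinearMap.ext fun t => h.injective (LinearMap.congr_fun hφψ t)
  surjective := hlift
  exact φ := by
    refine ⟨exists_lift_of_exact h.exact h.injective, ?_⟩
    rintro ⟨ψ, rfl⟩
    exact LinearMap.ext fun t => h.exact.apply_apply_eq_zero (ψ t)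

end Hom

section NuDual

variable (S A : Type u) [Ring S] [Ring A]
  (T : Type u) [AddCommGroup T] [Module S T] [Module A T] [SMulCommClass S A T]
  (M : Type u) [AddCommGroup M] [Module A M]

/-- The map `M⁺ → Hom_S(Hom_A(T, M), T⁺)`, `c ↦ (φ ↦ c ∘ φ)`, which is the character dual of the
evaluation map `ν_M`. -/
def nuDual : CharacterModule M →+ ((T →ₗ[A] M) →ₗ[Sᵐᵒᵖ] CharacterModule T) where
  toFun c :=
    { toFun φ := charMap φ.toAddMonoidHom c
      map_add' φ ψ := character_ext fun t => map_add c (φ t) (ψ t)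
      map_smul' _ _ := rfl }
  map_zero' := rfl
  map_add' _ _ := rfl

/-- Membership of `M` in the Bass class of a bimodule `T`, with the conditions on `Tor` and on
evaluation replaced by their character duals. -/
structure IsBassModule : Prop where
  ext : ∀ i, ExtZero A T M (i + 1)
  extHom : ∀ i, ExtZero Sᵐᵒᵖ (T →ₗ[A] M) (CharacterModule T) (i + 1)
  nu : Bijective (nuDual S A T M)

end NuDual

section BassClass

variable (S R : Type u) [Ring S] [Ring R]
  (T : Type u) [AddCommGroup T] [Module S T] [Module Rᵐᵒᵖ T] [SMulCommClass S Rᵐᵒᵖ T]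
  (M : Type u) [AddCommGroup M] [Module Rᵐᵒᵖ M]

theorem nuFun_bijective_iff_nuDual_bijective :
    Bijective (MTensor.nuFun S R T M) ↔ Bijective (nuDual S Rᵐᵒᵖ T M) := by
  rw [← charMap_bijective_iff]
  exact (Bijective.of_comp_iff' (MTensor.charEquiv S (T →ₗ[Rᵐᵒᵖ] M) T).bijective _).symm

theorem inBassClass_iff_isBassModule : InBassClass S R T M ↔ IsBassModule S Rᵐᵒᵖ T M := by
  constructor
  · rintro ⟨hext, htor, hnu⟩
    exact ⟨extVanishAll_iff_extZero.1 hext, torVanishAll_iff_extZero.1 htor,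
      (nuFun_bijective_iff_nuDual_bijective S R T M).1 hnu⟩
  · rintro ⟨hext, htor, hnu⟩
    exact ⟨extVanishAll_iff_extZero.2 hext, torVanishAll_iff_extZero.2 htor,
      (nuFun_bijective_iff_nuDual_bijective S R T M).2 hnu⟩

end BassClass

/-! ## The Bass class and short exact sequences -/

section TwoOfThree

/-- `N ⊗_S T = 0` implies `N = 0`, for every right `S`-module `N`: the half of tensor
faithfulness which concerns the left module structure of a bimodule. -/
def TensorReflectsZero (S : Type u) [Ring S] (T : Type u) [AddCommGroup T] [Module S T] : Prop :=
  ∀ (N : Type u) [AddCommGroup N] [Module Sᵐᵒᵖ N], Subsingleton (MTensor S N T) → Subsingleton N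

variable {S A : Type u} [Ring S] [Ring A]
  {T : Type u} [AddCommGroup T] [Module S T] [Module A T] [SMulCommClass S A T]
  {M₁ M₂ M₃ : Type u} [AddCommGroup M₁] [Module A M₁]
  [AddCommGroup M₂] [Module A M₂] [AddCommGroup M₃] [Module A M₃]
  {f : M₁ →ₗ[A] M₂} {g : M₂ →ₗ[A] M₃}

theorem nuDual_charMap (g : M₂ →ₗ[A] M₃) (c : CharacterModule M₃) :
    nuDual S A T M₂ (charMap g.toAddMonoidHom c) = (nuDual S A T M₃ c).comp (homMap S T g) := rfl

theorem eq_zero_of_nuDual_comp_homMap_eq_zero (hg : Surjective g)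
    (hM : Injective (nuDual S A T M₂)) {c : CharacterModule M₃}
    (hc : (nuDual S A T M₃ c).comp (homMap S T g) = 0) : c = 0 := by
  have hcg : charMap g.toAddMonoidHom c = 0 := (map_eq_zero_iff _ hM).1 hc
  refine character_ext fun x => ?_
  obtain ⟨y, rfl⟩ := hg x
  exact DFunLike.congr_fun hcg y

theorem exists_extension_homMap (hf : Injective f) (hM : Surjective (nuDual S A T M₁))
    (φ : (T →ₗ[A] M₁) →ₗ[Sᵐᵒᵖ] CharacterModule T) :
    ∃ ψ : (T →ₗ[A] M₂) →ₗ[Sᵐᵒᵖ] CharacterModule T, ψ.comp (homMap S T f) = φ := by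
  obtain ⟨c, rfl⟩ := hM φ
  obtain ⟨c', rfl⟩ := charMap_surjective (f := f.toAddMonoidHom) hf c
  exact ⟨nuDual S A T M₂ c', rfl⟩

namespace IsShortExact

theorem nuDual_injective₃ (h : IsShortExact f g) (h₂ : Injective (nuDual S A T M₂)) :
    Injective (nuDual S A T M₃) := by
  refine (injective_iff_map_eq_zero _).2 fun c hc => ?_
  refine eq_zero_of_nuDual_comp_homMap_eq_zero h.surjective h₂ ?_
  rw [hc, LinearMap.zero_comp]

theorem nuDual_surjective₃ (h : IsShortExact f g) (hlift : Surjective (homMap S T g))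
    (h₁ : Injective (nuDual S A T M₁)) (h₂ : Surjective (nuDual S A T M₂)) :
    Surjective (nuDual S A T M₃) := by
  intro ψ
  obtain ⟨c, hc⟩ := h₂ (ψ.comp (homMap S T g))
  have hcf : charMap f.toAddMonoidHom c = 0 := by
    refine (map_eq_zero_iff _ h₁).1 ?_
    rw [nuDual_charMap, hc, LinearMap.comp_assoc,
      (h.isShortExact_homMap S hlift).exact.linearMap_comp_eq_zero, LinearMap.comp_zero]
  obtain ⟨c', rfl⟩ :=
    (exact_charMap_iff (f := f.toAddMonoidHom) (g := g.toAddMonoidHom).2 h.exact c).1 hcf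
  exact ⟨c', (LinearMap.cancel_right hlift).1 hc⟩

theorem nuDual_injective₁ (h : IsShortExact f g) (hlift : Surjective (homMap S T g))
    (h₂ : Injective (nuDual S A T M₂)) (h₃ : Surjective (nuDual S A T M₃)) :
    Injective (nuDual S A T M₁) := by
  refine (injective_iff_map_eq_zero _).2 fun c hc => ?_
  obtain ⟨c, rfl⟩ := charMap_surjective (f := f.toAddMonoidHom) h.injective c
  obtain ⟨ψ, hψ⟩ :=
    exists_desc_of_exact (h.isShortExact_homMap S hlift).exact hlift (φ := nuDual S A T M₂ c) hc
  obtain ⟨d, rfl⟩ := h₃ ψ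
  obtain rfl : charMap g.toAddMonoidHom d = c := h₂ hψ
  exact (exact_charMap_iff.2 h.exact).apply_apply_eq_zero d

theorem nuDual_surjective₁ (h : IsShortExact f g) (hlift : Surjective (homMap S T g))
    (h₂ : Surjective (nuDual S A T M₂))
    (h₃ : ExtZero Sᵐᵒᵖ (T →ₗ[A] M₃) (CharacterModule T) 1) :
    Surjective (nuDual S A T M₁) := by
  intro ψ
  obtain ⟨ψ', rfl⟩ := (h.isShortExact_homMap S hlift).exists_extension h₃ ψ
  obtain ⟨c, rfl⟩ := h₂ ψ'
  exact ⟨_, nuDual_charMap f c⟩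

theorem isBassModule₃ (h : IsShortExact f g) (h₁ : IsBassModule S A T M₁)
    (h₂ : IsBassModule S A T M₂) : IsBassModule S A T M₃ := by
  have hlift : Surjective (homMap S T g) := h.exists_lift (h₁.ext 0)
  have hhom := h.isShortExact_homMap S hlift
  refine ⟨fun i => h.extZero_right₃ (h₁.ext (i + 1)) (h₂.ext i), ?_,
    h.nuDual_injective₃ h₂.nu.1, h.nuDual_surjective₃ hlift h₁.nu.1 h₂.nu.2⟩
  rintro (_ | i)
  · exact hhom.extZero_one_of_exists_extension (h₂.extHom 0)
      (exists_extension_homMap h.injective h₁.nu.2)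
  · exact hhom.extZero_left₃ (h₁.extHom i) (h₂.extHom (i + 1))

theorem isBassModule₁ (h : IsShortExact f g) (hlift : Surjective (homMap S T g))
    (h₂ : IsBassModule S A T M₂) (h₃ : IsBassModule S A T M₃) : IsBassModule S A T M₁ := by
  have hhom := h.isShortExact_homMap S hlift
  refine ⟨?_, fun i => hhom.extZero_left₁ (h₂.extHom i) (h₃.extHom (i + 1)),
    h.nuDual_injective₁ hlift h₂.nu.1 h₃.nu.2, h.nuDual_surjective₁ hlift h₂.nu.2 (h₃.extHom 0)⟩
  rintro (_ | i)
  · exact h.extZero_one_of_exists_lift (h₂.ext 0) hlift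
  · exact h.extZero_right₁ (h₂.ext (i + 1)) (h₃.ext i)

end IsShortExact

theorem homMap_surjective_of_tensorReflectsZero (hT : TensorReflectsZero S T) (hg : Surjective g)
    (h₂ : Injective (nuDual S A T M₂)) (h₃ : Surjective (nuDual S A T M₃)) :
    Surjective (homMap S T g) := by
  set Q := (T →ₗ[A] M₃) ⧸ LinearMap.range (homMap S T g)
  suffices hQ : ∀ φ : Q →ₗ[Sᵐᵒᵖ] CharacterModule T, φ = 0 by
    have := hT Q (MTensor.subsingleton_of_forall_hom_eq_zero hQ)
    exact LinearMap.range_eq_top.1 (Submodule.Quotient.subsingleton_iff.1 this)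
  intro φ
  obtain ⟨c, hc⟩ := h₃ (φ.comp (Submodule.mkQ _))
  have hc₀ : c = 0 := by
    refine eq_zero_of_nuDual_comp_homMap_eq_zero hg h₂ ?_
    rw [hc, LinearMap.comp_assoc, LinearMap.range_mkQ_comp, LinearMap.comp_zero]
  refine (LinearMap.cancel_right (Submodule.mkQ_surjective _)).1 ?_
  rw [← hc, hc₀, map_zero, LinearMap.zero_comp]

theorem IsShortExact.isBassModule₁_of_tensorReflectsZero (h : IsShortExact f g)
    (hT : TensorReflectsZero S T) (h₂ : IsBassModule S A T M₂) (h₃ : IsBassModule S A T M₃) :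
    IsBassModule S A T M₁ :=
  h.isBassModule₁ (homMap_surjective_of_tensorReflectsZero hT h.surjective h₂.nu.1 h₃.nu.2) h₂ h₃

end TwoOfThree

/-! ## Coherence and finite presentation -/

section Coherence

variable {S : Type u} [Ring S] {X Y : Type u} [AddCommGroup X] [Module S X]
  [AddCommGroup Y] [Module S Y]

/-- Every finitely generated submodule of `X` is finitely presented (for finitely generated `X`
this is coherence in the sense of Bourbaki). -/
def IsPseudoCoherentModule (S : Type u) [Ring S] (X : Type u) [AddCommGroup X] [Module S X] :
    Prop :=
  ∀ N : Submodule S X, N.FG → Module.FinitePresentation S N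

namespace IsPseudoCoherentModule

theorem finitePresentation_of_injective (hY : IsPseudoCoherentModule S Y) [Module.Finite S X]
    {i : X →ₗ[S] Y} (hi : Injective i) : Module.FinitePresentation S X := by
  have := hY (LinearMap.range i) (Module.Finite.iff_fg.1 inferInstance)
  exact .of_equiv (LinearEquiv.ofInjective i hi).symm

theorem of_injective (hY : IsPseudoCoherentModule S Y) {e : X →ₗ[S] Y} (he : Injective e) :
    IsPseudoCoherentModule S X := fun N hN =>
  have : Module.Finite S N := .of_fg hN
  hY.finitePresentation_of_injective (i := e.comp N.subtype) (he.comp N.injective_subtype)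

theorem prod (hX : IsPseudoCoherentModule S X) (hY : IsPseudoCoherentModule S Y) :
    IsPseudoCoherentModule S (X × Y) := by
  intro N hN
  have : Module.Finite S N := .of_fg hN
  let g := ((LinearMap.snd S X Y).comp N.subtype).rangeRestrict
  have hg : Surjective g := LinearMap.surjective_rangeRestrict _
  have : Module.FinitePresentation S (LinearMap.range ((LinearMap.snd S X Y).comp N.subtype)) :=
    hY _ (Module.Finite.iff_fg.1 inferInstance)
  have : Module.Finite S (LinearMap.ker g) := .of_fg (Module.FinitePresentation.fg_ker g hg)
  let i : LinearMap.ker g →ₗ[S] X :=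
    (LinearMap.fst S X Y).comp (N.subtype.comp (LinearMap.ker g).subtype)
  have hi : Injective i := by
    rintro ⟨a, ha⟩ ⟨b, hb⟩ hab
    have ha₀ : (a : X × Y).2 = 0 := congrArg Subtype.val ha
    have hb₀ : (b : X × Y).2 = 0 := congrArg Subtype.val hb
    exact Subtype.ext (Subtype.ext (Prod.ext hab (ha₀.trans hb₀.symm)))
  have := hX.finitePresentation_of_injective (X := LinearMap.ker g) hi
  exact Module.finitePresentation_of_ker g hg

end IsPseudoCoherentModule

theorem IsLeftCoherentRing.isPseudoCoherentModule (hS : IsLeftCoherentRing S) (n : ℕ) :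
    IsPseudoCoherentModule S (Fin n → S) := by
  induction n with
  | zero => exact fun _ _ => Module.finitePresentation_of_projective S _
  | succ n ih =>
    exact (IsPseudoCoherentModule.prod (X := S) hS ih).of_injective
      (Fin.consLinearEquiv S fun _ => S).symm.injective

theorem IsLeftCoherentRing.exists_syzygy (hS : IsLeftCoherentRing S)
    [Module.FinitePresentation S X] :
    ∃ (n : ℕ) (q : (Fin n → S) →ₗ[S] X), Surjective q ∧
      Module.FinitePresentation S (LinearMap.ker q) := by
  obtain ⟨n, q, hq⟩ := Module.Finite.exists_fin' S X
  exact ⟨n, q, hq, hS.isPseudoCoherentModule n _ (Module.FinitePresentation.fg_ker q hq)⟩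

theorem IsRightNoetherianRing.isNoetherianRing {R : Type u} [Ring R]
    (hR : IsRightNoetherianRing R) : IsNoetherianRing Rᵐᵒᵖ := by
  have : IsNoetherian Rᵐᵒᵖ R := ⟨hR⟩
  let e : R ≃ₗ[Rᵐᵒᵖ] Rᵐᵒᵖ := { opAddEquiv with map_smul' := fun _ _ => rfl }
  exact isNoetherian_of_linearEquiv e

theorem HasFGProjResolution.finitePresentation (h : HasFGProjResolution S X) :
    Module.FinitePresentation S X := by
  obtain ⟨Q, hQ, hfin⟩ := h
  have := hfin 0
  have := hfin 1
  have := hQ.proj 0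
  have : Module.FinitePresentation S (Q.P 0) := Module.finitePresentation_of_projective _ _
  refine Module.finitePresentation_of_surjective Q.ε hQ.surj ?_
  rw [hQ.exact0.linearMap_ker_eq]
  exact Module.Finite.iff_fg.1 inferInstance

end Coherence

/-! ## Injective modules and injective dimension -/

section Injective

variable {A : Type u} [Ring A] {X Y : Type u} [AddCommGroup X] [Module A X]
  [AddCommGroup Y] [Module A Y]

variable (A Y) in
theorem exists_injective_embedding :
    ∃ (E : ModuleCat.{u} A) (f : Y →ₗ[A] E), Injective f ∧ Module.Injective A E :=
  ⟨CategoryTheory.Injective.under (ModuleCat.of A Y),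
    (CategoryTheory.Injective.ι (ModuleCat.of A Y)).hom,
    (ModuleCat.mono_iff_injective _).1 inferInstance,
    @Module.injective_module_of_injective_object A _ _ _ _
      (CategoryTheory.Injective.injective_under (ModuleCat.of A Y))⟩

theorem HasClassCoresolution.extZero {n : ℕ} {Y : ModuleCat.{u} A}
    (h : HasClassCoresolution A (fun E => Module.Injective A E) n Y) (j : ℕ) :
    ExtZero A X Y (n + j + 1) := by
  induction n generalizing Y j with
  | zero => exact .of_injective h _
  | succ n ih =>
    obtain ⟨m, hm, hr⟩ := h
    rw [show n + 1 + j + 1 = n + j + 1 + 1 by omega]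
    exact (IsShortExact.range_mkQ m.inj).extZero_right₁ (.of_injective hm _) (ih hr j)

theorem injective_of_forall_finite_extZero
    (h : ∀ (X : Type u) [AddCommGroup X] [Module A X], Module.Finite A X → ExtZero A X Y 1) :
    Module.Injective A Y := by
  refine Module.Baer.injective fun I g => ?_
  obtain ⟨ψ, hψ⟩ := (IsShortExact.subtype_mkQ I).exists_extension (h (A ⧸ I) inferInstance) g
  exact ⟨ψ, fun x hx => LinearMap.congr_fun hψ ⟨x, hx⟩⟩

theorem extZero_of_forall_finite_extZero {n : ℕ}
    (h : ∀ (X : Type u) [AddCommGroup X] [Module A X], Module.Finite A X → ExtZero A X Y (n + 1))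
    (j : ℕ) : ExtZero A X Y (n + j + 1) := by
  induction n generalizing Y j with
  | zero => exact .of_injective (injective_of_forall_finite_extZero h) _
  | succ n ih =>
    obtain ⟨E, f, hf, hE⟩ := exists_injective_embedding A Y
    have hs := IsShortExact.range_mkQ hf
    rw [show n + 1 + j + 1 = n + j + 1 + 1 by omega]
    exact hs.extZero_right₁ (.of_injective hE _)
      (ih (fun X _ _ hX => hs.extZero_right₃ (h X hX) (.of_injective hE n)) j)

theorem injective_character_self (S : Type u) [Ring S] :
    Module.Injective Sᵐᵒᵖ (CharacterModule S) where
  out X Y _ _ _ _ f hf g := by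
    obtain ⟨c, hc⟩ := charMap_surjective (f := f.toAddMonoidHom) hf
      (AddMonoidHom.mk' (fun x => g x 1) fun x x' => by rw [map_add, character_add_apply])
    refine ⟨{ toFun y := AddMonoidHom.mk' (fun s => c (op s • y)) fun s s' => by
                rw [op_add, add_smul, map_add]
              map_add' y y' := character_ext fun s =>
                (congrArg c (smul_add (op s) y y')).trans (map_add c _ _)
              map_smul' s y := character_ext fun s' => congrArg c (smul_smul (op s') s y) },
      fun x => character_ext fun s => ?_⟩
    calc c (op s • f x) = c (f (op s • x)) := by rw [map_smul f]
      _ = g (op s • x) 1 := DFunLike.congr_fun hc _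
      _ = g x s := by
        rw [map_smul g, character_op_smul_apply, unop_op, smul_eq_mul, mul_one]

theorem injective_character_pi (S : Type u) [Ring S] (n : ℕ) :
    Module.Injective Sᵐᵒᵖ (CharacterModule (Fin n → S)) where
  out X Y _ _ _ _ f hf g := by
    have := injective_character_self S
    obtain ⟨ψ, hψ⟩ := Module.Injective.extension_property Sᵐᵒᵖ (Fin n → CharacterModule S) X Y f hf
      (LinearMap.pi fun i => (charDual (LinearMap.single S (fun _ => S) i)).comp g)
    refine ⟨(∑ i, (charDual (LinearMap.proj i)).comp (LinearMap.proj i)).comp ψ,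
      fun x => character_ext fun v => ?_⟩
    have hψx : ψ (f x) = fun i => charDual (LinearMap.single S (fun _ => S) i) (g x) :=
      LinearMap.congr_fun hψ x
    rw [LinearMap.comp_apply, hψx, LinearMap.sum_apply]
    refine (AddMonoidHom.finsetSum_apply _ _ v).trans ?_
    change ∑ i, g x (Pi.single i (v i)) = g x v
    rw [← map_sum, Finset.univ_sum_single]

end Injective

/-! ## Homs into a bimodule and injective coefficients -/

section Coordinates

variable {B : Type u} [Ring B] (C : Type*) [Ring C] (T : Type u) [AddCommGroup T] [Module B T]
  [Module C T] [SMulCommClass B C T] {n : ℕ}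

/-- The inclusion of the `i`-th coordinate in `Hom_B(B^n, T) ≅ T^n`. -/
def coordHom (i : Fin n) : T →ₗ[C] ((Fin n → B) →ₗ[B] T) :=
  (LinearEquiv.piRing B T (Fin n) C).symm.toLinearMap.comp (LinearMap.single C (fun _ => T) i)

theorem coordHom_apply (i : Fin n) (t : T) (v : Fin n → B) : coordHom C T i t v = v i • t := by
  simp [coordHom, LinearEquiv.piRing_symm_apply, Pi.single_apply]

theorem sum_coordHom (φ : (Fin n → B) →ₗ[B] T) :
    ∑ i, coordHom C T i (φ (Pi.single i 1)) = φ := by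
  refine LinearMap.ext fun v => ?_
  simp only [LinearMap.sum_apply, coordHom_apply, ← map_smul, ← map_sum, ← Pi.single_smul,
    smul_eq_mul, mul_one, Finset.univ_sum_single]

end Coordinates

section TensorEval

variable {S A : Type u} [Ring S] [Ring A]
  {T : Type u} [AddCommGroup T] [Module S T] [Module A T] [SMulCommClass S A T]
  {E : Type u} [AddCommGroup E] [Module A E]
  {X Y Z : Type u} [AddCommGroup X] [Module S X] [AddCommGroup Y] [Module S Y]
  [AddCommGroup Z] [Module S Z]

theorem lcomp_surjective {f : X →ₗ[S] Y} {g : Y →ₗ[S] Z} (h : IsShortExact f g)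
    (hZ : ExtZero S Z T 1) : Surjective (LinearMap.lcomp A T f) :=
  h.exists_extension hZ

theorem exact_lcomp_of_surjective {f : X →ₗ[S] Y} {g : Y →ₗ[S] Z} (h : Exact f g)
    (hg : Surjective g) : Exact (LinearMap.lcomp A T g) (LinearMap.lcomp A T f) := fun φ =>
  ⟨exists_desc_of_exact h hg, by
    rintro ⟨ψ, rfl⟩
    exact LinearMap.ext fun x => (congrArg ψ (h.apply_apply_eq_zero x)).trans (map_zero ψ)⟩

theorem exact_lcomp_of_injective {M₁ M₂ M₃ : Type u} [AddCommGroup M₁] [Module A M₁]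
    [AddCommGroup M₂] [Module A M₂] [AddCommGroup M₃] [Module A M₃] (hE : Module.Injective A E)
    {f : M₁ →ₗ[A] M₂} {g : M₂ →ₗ[A] M₃} (h : Exact f g) :
    Exact (LinearMap.lcomp ℤ E g) (LinearMap.lcomp ℤ E f) := by
  intro φ
  constructor
  · intro hφ
    obtain ⟨ψ, hψ⟩ := exists_desc_of_exact (g := g.rangeRestrict) (φ := φ)
      (fun x => Subtype.ext_iff.trans (h x)) g.surjective_rangeRestrict hφ
    obtain ⟨χ, hχ⟩ := Module.Injective.extension_property A E _ _ (LinearMap.range g).subtype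
      (LinearMap.range g).injective_subtype ψ
    exact ⟨χ, by rw [← hψ, ← hχ]; rfl⟩
  · rintro ⟨ψ, rfl⟩
    exact LinearMap.ext fun x => (congrArg ψ (h.apply_apply_eq_zero x)).trans (map_zero ψ)

variable (S A T E X) in
/-- The character dual of the evaluation map `Hom_A(T, E) ⊗_S X → Hom_A(Hom_S(X, T), E)`. -/
def tensorEvalDual :
    CharacterModule ((X →ₗ[S] T) →ₗ[A] E) →+ ((T →ₗ[A] E) →ₗ[Sᵐᵒᵖ] CharacterModule X) where
  toFun c :=
    { toFun h := AddMonoidHom.mk' (fun x => c (h.comp (LinearMap.applyₗ' A x))) fun x x' => by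
        rw [map_add, LinearMap.comp_add, map_add]
      map_add' h h' := character_ext fun x => map_add c (h.comp _) (h'.comp _)
      map_smul' s h := character_ext fun x => congrArg c <| LinearMap.ext fun φ =>
        congrArg h (map_smul φ s.unop x).symm }
  map_zero' := rfl
  map_add' _ _ := rfl

variable (A T E) in
/-- Functoriality of `Hom_A(Hom_S(X, T), E)` in `X`. -/
def homHomMap (q : X →ₗ[S] Y) : ((X →ₗ[S] T) →ₗ[A] E) →+ ((Y →ₗ[S] T) →ₗ[A] E) :=
  (LinearMap.lcomp ℤ E (LinearMap.lcomp A T q)).toAddMonoidHom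

theorem charDual_comp_tensorEvalDual (q : X →ₗ[S] Y)
    (c : CharacterModule ((Y →ₗ[S] T) →ₗ[A] E)) :
    (charDual q).comp (tensorEvalDual S A T E Y c) =
      tensorEvalDual S A T E X (charMap (homHomMap A T E q) c) := rfl

theorem exact_homHomMap (hE : Module.Injective A E) {p : X →ₗ[S] Y} {q : Y →ₗ[S] Z}
    (h : Exact p q) (hq : Surjective q) : Exact (homHomMap A T E p) (homHomMap A T E q) :=
  exact_lcomp_of_injective hE (exact_lcomp_of_surjective h hq)

theorem tensorEvalDual_pi_injective {n : ℕ} :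
    Injective (tensorEvalDual S A T E (Fin n → S)) := by
  refine (injective_iff_map_eq_zero _).2 fun c hc => character_ext fun ψ => ?_
  have hψ : ψ = ∑ i, (ψ.comp (coordHom A T i)).comp (LinearMap.applyₗ' A (Pi.single i 1)) := by
    refine LinearMap.ext fun φ => ?_
    conv_lhs => rw [← sum_coordHom A T φ, map_sum]
    rw [LinearMap.sum_apply]
    rfl
  rw [hψ, map_sum]
  exact Finset.sum_eq_zero fun i _ =>
    DFunLike.congr_fun (LinearMap.congr_fun hc (ψ.comp (coordHom A T i))) (Pi.single i 1)

theorem tensorEvalDual_pi_surjective {n : ℕ} :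
    Surjective (tensorEvalDual S A T E (Fin n → S)) := by
  intro h
  refine ⟨∑ i, (AddMonoidHom.mk' (fun ψ => h (ψ.comp (coordHom A T i)) (Pi.single i 1))
    fun ψ ψ' => by rw [LinearMap.add_comp, map_add, character_add_apply]),
    LinearMap.ext fun f => character_ext fun v => ?_⟩
  refine (AddMonoidHom.finsetSum_apply _ _ _).trans ?_
  have hf (i : Fin n) :
      (f.comp (LinearMap.applyₗ' A v)).comp (coordHom A T i) = op (v i) • f :=
    LinearMap.ext fun t => congrArg f (coordHom_apply A T i t v)
  calc ∑ i, h ((f.comp (LinearMap.applyₗ' A v)).comp (coordHom A T i)) (Pi.single i 1)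
      = ∑ i, h f (Pi.single i (v i)) := Finset.sum_congr rfl fun i _ => by
        rw [hf, map_smul h, character_op_smul_apply, unop_op, ← Pi.single_smul, smul_eq_mul,
          mul_one]
    _ = h f v := by rw [← map_sum, Finset.univ_sum_single]

theorem tensorEvalDual_surjective (hE : Module.Injective A E) [Module.FinitePresentation S X] :
    Surjective (tensorEvalDual S A T E X) := by
  intro h
  obtain ⟨n, m, q, p, hq, hpq⟩ := Module.FinitePresentation.exists_fin' S X
  obtain ⟨c, hc⟩ := tensorEvalDual_pi_surjective ((charDual q).comp h)
  have hcp : charMap (homHomMap A T E p) c = 0 := by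
    refine (map_eq_zero_iff _ tensorEvalDual_pi_injective).1 ?_
    rw [← charDual_comp_tensorEvalDual, hc]
    exact LinearMap.ext fun f => character_ext fun x =>
      (congrArg (h f) (hpq.apply_apply_eq_zero x)).trans (map_zero _)
  obtain ⟨c', rfl⟩ := (exact_charMap_iff.2 (exact_homHomMap hE hpq hq) c).1 hcp
  refine ⟨c', LinearMap.ext fun f => character_ext fun x => ?_⟩
  obtain ⟨y, rfl⟩ := hq x
  exact DFunLike.congr_fun (LinearMap.congr_fun hc f) y

theorem extZero_one_character_of_injective (hE : Module.Injective A E) (hS : IsLeftCoherentRing S)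
    [Module.FinitePresentation S X] (hX : ExtZero S X T 1) :
    ExtZero Sᵐᵒᵖ (T →ₗ[A] E) (CharacterModule X) 1 := by
  obtain ⟨n, q, hq, _⟩ := hS.exists_syzygy (X := X)
  have hs := IsShortExact.ker_subtype hq
  refine hs.isShortExact_charDual.extZero_one_of_exists_lift
    (.of_injective (injective_character_pi S n) 0) fun h => ?_
  obtain ⟨c, rfl⟩ := tensorEvalDual_surjective hE h
  have hinj : Injective (homHomMap A T E (LinearMap.ker q).subtype) := fun ψ ψ' hψ => by
    refine LinearMap.ext fun φ => ?_
    obtain ⟨φ, rfl⟩ := lcomp_surjective (A := A) hs hX φ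
    exact LinearMap.congr_fun hψ φ
  obtain ⟨c', rfl⟩ := charMap_surjective hinj c
  exact ⟨tensorEvalDual S A T E _ c', rfl⟩

theorem extZero_character_of_injective (hE : Module.Injective A E) (hS : IsLeftCoherentRing S)
    (i : ℕ) [Module.FinitePresentation S X] (hX : ExtZero S X T (i + 1)) :
    ExtZero Sᵐᵒᵖ (T →ₗ[A] E) (CharacterModule X) (i + 1) := by
  induction i generalizing X with
  | zero => exact extZero_one_character_of_injective hE hS hX
  | succ i ih =>
    obtain ⟨n, q, hq, _⟩ := hS.exists_syzygy (X := X)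
    have hs := IsShortExact.ker_subtype hq
    exact hs.isShortExact_charDual.extZero_right₁
      (.of_injective (injective_character_pi S n) (i + 1))
      (ih (hs.extZero_left₁ (.of_projective inferInstance i) hX))

end TensorEval

/-! ## Injective modules lie in the Bass class -/

section InjectiveMembers

variable {S A : Type u} [Ring S] [Ring A]
  {T : Type u} [AddCommGroup T] [Module S T] [Module A T] [SMulCommClass S A T]
  {E : Type u} [AddCommGroup E] [Module A E]

theorem toSpanSingleton_pi_injective [FaithfulSMul A T] {n : ℕ} {q : (Fin n → S) →ₗ[S] T}
    (hq : Surjective q) :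
    Injective (LinearMap.toSpanSingleton A (Fin n → T) fun i => q (Pi.single i 1)) := by
  refine (injective_iff_map_eq_zero _).2 fun a ha =>
    FaithfulSMul.eq_of_smul_eq_smul fun t : T => ?_
  have hq₀ : a • q = 0 := LinearMap.pi_ext' fun i => LinearMap.ext_ring (congrFun ha i)
  obtain ⟨v, rfl⟩ := hq t
  exact (LinearMap.congr_fun hq₀ v).trans (zero_smul A (q v)).symm

theorem nuDual_injective_of_injective [Module.Finite S T] [FaithfulSMul A T]
    (hE : Module.Injective A E) : Injective (nuDual S A T E) := by
  refine (injective_iff_map_eq_zero _).2 fun c hc => character_ext fun e => ?_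
  obtain ⟨n, q, hq⟩ := Module.Finite.exists_fin' S T
  obtain ⟨ψ, hψ⟩ := Module.Injective.extension_property A E _ _ _
    (toSpanSingleton_pi_injective (A := A) hq) (LinearMap.toSpanSingleton A E e)
  have he : e = ∑ i, ψ (Pi.single i (q (Pi.single i 1))) := by
    rw [← map_sum, Finset.univ_sum_single]
    simpa using (LinearMap.congr_fun hψ 1).symm
  rw [he, map_sum]
  exact Finset.sum_eq_zero fun i _ => DFunLike.congr_fun
    (LinearMap.congr_fun hc (ψ.comp (LinearMap.single A (fun _ => T) i))) (q (Pi.single i 1))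

theorem nuDual_surjective_of_injective [Module.FinitePresentation S T]
    (hA : ∀ φ : T →ₗ[S] T, ∃ a : A, ∀ t, a • t = φ t) (hE : Module.Injective A E) :
    Surjective (nuDual S A T E) := by
  intro h
  obtain ⟨c, rfl⟩ := tensorEvalDual_surjective hE h
  let evalId : ((T →ₗ[S] T) →ₗ[A] E) →+ E := (LinearMap.applyₗ' ℤ LinearMap.id).toAddMonoidHom
  have hinj : Injective evalId := fun ψ ψ' hψ => by
    refine LinearMap.ext fun φ => ?_
    obtain ⟨a, ha⟩ := hA φ
    have hφ : φ = a • LinearMap.id := LinearMap.ext fun t => (ha t).symm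
    rw [hφ, map_smul, map_smul]
    exact congrArg (a • ·) hψ
  obtain ⟨c', rfl⟩ := charMap_surjective hinj c
  exact ⟨c', rfl⟩

end InjectiveMembers

/-! ## Direct sums of copies of `T` lie in the Bass class -/

section Finsupp

variable {A : Type u} [Ring A] {I T X : Type u} [AddCommGroup T] [Module A T]
  [AddCommGroup X] [Module A X]

theorem exists_eq_sum_lsingle_comp_lapply [Module.Finite A X] (f : X →ₗ[A] (I →₀ T)) :
    ∃ s : Finset I, f = ∑ i ∈ s, (Finsupp.lsingle i).comp ((Finsupp.lapply i).comp f) := by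
  classical
  obtain ⟨n, q, hq⟩ := Module.Finite.exists_fin' A X
  refine ⟨Finset.univ.biUnion fun k : Fin n => (f (q (Pi.single k 1))).support,
    LinearMap.ext fun x => Finsupp.ext fun i => ?_⟩
  obtain ⟨v, rfl⟩ := hq x
  suffices hi : (∀ k, f (q (Pi.single k 1)) i = 0) → f (q v) i = 0 by
    simpa [Finsupp.finsetSum_apply, Finsupp.single_apply] using hi
  intro hi
  have hfq : ((Finsupp.lapply i).comp f).comp q = 0 :=
    LinearMap.pi_ext' fun k => LinearMap.ext_ring (hi k)
  exact LinearMap.congr_fun hfq v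

theorem extZero_finsupp_right [IsNoetherianRing A] (I : Type u) (i : ℕ) [Module.Finite A X]
    (h : ExtZero A X T (i + 1)) : ExtZero A X (I →₀ T) (i + 1) := by
  obtain ⟨n, q, hq⟩ := Module.Finite.exists_fin' A X
  have hs := IsShortExact.ker_subtype hq
  induction i generalizing X n with
  | zero =>
    refine hs.extZero_one_of_exists_extension (.of_projective inferInstance 0) fun φ => ?_
    obtain ⟨s, hφ⟩ := exists_eq_sum_lsingle_comp_lapply φ
    choose ψ hψ using fun i => hs.exists_extension h ((Finsupp.lapply i).comp φ)
    refine ⟨∑ i ∈ s, (Finsupp.lsingle i).comp (ψ i), ?_⟩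
    refine (map_sum (LinearMap.lcomp ℤ (I →₀ T) (LinearMap.ker q).subtype) _ s).trans
      (Eq.trans (Finset.sum_congr rfl fun i _ => ?_) hφ.symm)
    exact congrArg (Finsupp.lsingle i).comp (hψ i)
  | succ i ih =>
    obtain ⟨m, p, hp⟩ := Module.Finite.exists_fin' A (LinearMap.ker q)
    exact hs.extZero_left₃ (ih (hs.extZero_left₁ (.of_projective inferInstance i) h) m p hp
      (.ker_subtype hp)) (.of_projective inferInstance _)

/-- The map `S^(I) → Hom_A(T, T^(I))` sending the `i`-th basis vector to the `i`-th inclusion. -/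
def finsuppHom (S A T : Type u) [Ring S] [Ring A] [AddCommGroup T] [Module S T] [Module A T]
    [SMulCommClass S A T] (I : Type u) : (I →₀ Sᵐᵒᵖ) →ₗ[Sᵐᵒᵖ] (T →ₗ[A] (I →₀ T)) :=
  Finsupp.linearCombination Sᵐᵒᵖ fun i => (Finsupp.lsingle i : T →ₗ[A] (I →₀ T))

variable {S : Type u} [Ring S] [Module S T] [SMulCommClass S A T]

theorem finsuppHom_single (i : I) (s : Sᵐᵒᵖ) :
    finsuppHom S A T I (Finsupp.single i s) = s • (Finsupp.lsingle i : T →ₗ[A] (I →₀ T)) :=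
  Finsupp.linearCombination_single Sᵐᵒᵖ s i

theorem finsuppHom_apply (x : I →₀ Sᵐᵒᵖ) (t : T) (i : I) :
    finsuppHom S A T I x t i = (x i).unop • t := by
  classical
  induction x using Finsupp.induction_linear with
  | zero => simp
  | add x y hx hy =>
    rw [map_add, LinearMap.add_apply, Finsupp.add_apply, hx, hy, Finsupp.add_apply, unop_add,
      add_smul]
  | single j s =>
    rw [finsuppHom_single, Finsupp.single_apply]
    refine (Finsupp.single_apply (a := j) (b := s.unop • t)).trans ?_
    split_ifs
    · rfl
    · exact (zero_smul S t).symm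

theorem finsuppHom_injective [FaithfulSMul S T] : Injective (finsuppHom S A T I) := by
  refine (injective_iff_map_eq_zero _).2 fun x hx => Finsupp.ext fun i => unop_injective ?_
  refine FaithfulSMul.eq_of_smul_eq_smul fun t : T => ?_
  rw [← finsuppHom_apply (A := A), hx]
  exact (zero_smul S t).symm

theorem finsuppHom_surjective [Module.Finite A T]
    (hS : ∀ φ : T →ₗ[A] T, ∃ s : S, ∀ t, s • t = φ t) : Surjective (finsuppHom S A T I) := by
  intro f
  obtain ⟨s, hf⟩ := exists_eq_sum_lsingle_comp_lapply f
  choose y hy using fun i => hS ((Finsupp.lapply i).comp f)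
  refine ⟨∑ i ∈ s, Finsupp.single i (op (y i)), (map_sum _ _ s).trans
    (Eq.trans (Finset.sum_congr rfl fun i _ => LinearMap.ext fun t => ?_) hf.symm)⟩
  rw [finsuppHom_single]
  exact congrArg (Finsupp.single i) (hy i t)

theorem nuDual_finsupp_injective : Injective (nuDual S A T (I →₀ T)) := by
  refine (injective_iff_map_eq_zero _).2 fun c hc => character_ext fun x => ?_
  induction x using Finsupp.induction_linear with
  | zero => rw [map_zero, character_zero_apply]
  | add x y hx hy => rw [map_add, map_add, hx, hy]
  | single i t => exact DFunLike.congr_fun (LinearMap.congr_fun hc (Finsupp.lsingle i)) t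

theorem nuDual_finsupp_surjective (hT : Surjective (finsuppHom S A T I)) :
    Surjective (nuDual S A T (I →₀ T)) := by
  intro h
  let c : CharacterModule (I →₀ T) :=
    Finsupp.liftAddHom fun i => (h (Finsupp.lsingle i) : T →+ AddCircle (1 : ℚ))
  refine ⟨c, LinearMap.ext fun f => ?_⟩
  obtain ⟨x, rfl⟩ := hT f
  induction x using Finsupp.induction_linear with
  | zero => simp only [map_zero]
  | add x y hx hy => rw [map_add, map_add, map_add, hx, hy]
  | single i s =>
    rw [finsuppHom_single, map_smul, map_smul]
    exact congrArg (s • ·) (character_ext fun t => Finsupp.liftAddHom_apply_single _ i t)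

end Finsupp

namespace IsWakamatsuTilting

variable {S R : Type u} [Ring S] [Ring R]
  {T : Type u} [AddCommGroup T] [Module S T] [Module Rᵐᵒᵖ T] [SMulCommClass S Rᵐᵒᵖ T]

theorem finitePresentation_left (hW : IsWakamatsuTilting S R T) : Module.FinitePresentation S T :=
  hW.fgProjResS.finitePresentation

theorem finitePresentation_right (hW : IsWakamatsuTilting S R T) :
    Module.FinitePresentation Rᵐᵒᵖ T :=
  hW.fgProjResR.finitePresentation

theorem faithfulSMul_left (hW : IsWakamatsuTilting S R T) : FaithfulSMul S T where
  eq_of_smul_eq_smul h := hW.bijS.1 (LinearMap.ext h)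

theorem faithfulSMul_right (hW : IsWakamatsuTilting S R T) : FaithfulSMul Rᵐᵒᵖ T where
  eq_of_smul_eq_smul h := unop_injective (hW.bijR.1 (LinearMap.ext h))

theorem exists_smul_eq_left (hW : IsWakamatsuTilting S R T) (φ : T →ₗ[Rᵐᵒᵖ] T) :
    ∃ s : S, ∀ t, s • t = φ t :=
  (hW.bijS.2 φ).imp fun _ => LinearMap.congr_fun

theorem exists_smul_eq_right (hW : IsWakamatsuTilting S R T) (φ : T →ₗ[S] T) :
    ∃ r : Rᵐᵒᵖ, ∀ t, r • t = φ t :=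
  let ⟨r, hr⟩ := hW.bijR.2 φ
  ⟨op r, LinearMap.congr_fun hr⟩

theorem isBassModule_of_injective (hW : IsWakamatsuTilting S R T) (hS : IsLeftCoherentRing S)
    {E : Type u} [AddCommGroup E] [Module Rᵐᵒᵖ E] (hE : Module.Injective Rᵐᵒᵖ E) :
    IsBassModule S Rᵐᵒᵖ T E := by
  have := hW.finitePresentation_left
  have := hW.faithfulSMul_right
  exact
    { ext := .of_injective hE
      extHom i := extZero_character_of_injective hE hS i (extVanishAll_iff_extZero.1 hW.extS i)
      nu := ⟨nuDual_injective_of_injective hE,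
        nuDual_surjective_of_injective hW.exists_smul_eq_right hE⟩ }

theorem finsuppHom_bijective (hW : IsWakamatsuTilting S R T) (I : Type u) :
    Bijective (finsuppHom S Rᵐᵒᵖ T I) :=
  have := hW.finitePresentation_right
  have := hW.faithfulSMul_left
  ⟨finsuppHom_injective, finsuppHom_surjective hW.exists_smul_eq_left⟩

theorem projective_hom_finsupp (hW : IsWakamatsuTilting S R T) (I : Type u) :
    Module.Projective Sᵐᵒᵖ (T →ₗ[Rᵐᵒᵖ] (I →₀ T)) :=
  .of_equiv (LinearEquiv.ofBijective _ (hW.finsuppHom_bijective I))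

theorem isBassModule_finsupp (hW : IsWakamatsuTilting S R T) (hR : IsRightNoetherianRing R)
    (I : Type u) : IsBassModule S Rᵐᵒᵖ T (I →₀ T) := by
  have := hR.isNoetherianRing
  have := hW.finitePresentation_right
  exact
    { ext i := extZero_finsupp_right I i (extVanishAll_iff_extZero.1 hW.extR i)
      extHom := .of_projective (hW.projective_hom_finsupp I)
      nu := ⟨nuDual_finsupp_injective, nuDual_finsupp_surjective (hW.finsuppHom_bijective I).2⟩ }

end IsWakamatsuTilting

/-! ## Covers of Bass modules by sums of copies of `T` -/

theorem IsBassModule.exists_cover {S R : Type u} [Ring S] [Ring R]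
    {T : Type u} [AddCommGroup T] [Module S T] [Module Rᵐᵒᵖ T] [SMulCommClass S Rᵐᵒᵖ T]
    {M : Type u} [AddCommGroup M] [Module Rᵐᵒᵖ M] (hW : IsWakamatsuTilting S R T)
    (hR : IsRightNoetherianRing R) (hM : IsBassModule S Rᵐᵒᵖ T M) :
    ∃ (I : Type u) (K : ModuleCat.{u} Rᵐᵒᵖ) (f : K →ₗ[Rᵐᵒᵖ] (I →₀ T)) (g : (I →₀ T) →ₗ[Rᵐᵒᵖ] M),
      IsShortExact f g ∧ IsBassModule S Rᵐᵒᵖ T K ∧ Surjective (homMap S T g) := by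
  let g : ((T →ₗ[Rᵐᵒᵖ] M) →₀ T) →ₗ[Rᵐᵒᵖ] M := Finsupp.lsum ℕ fun φ => φ
  have hg (φ : T →ₗ[Rᵐᵒᵖ] M) (t : T) : g (Finsupp.single φ t) = φ t := Finsupp.lsum_single _ _ _ _
  have hsurj : Surjective g := fun y =>
    mem_range_of_forall_charMap_eq_zero g.toAddMonoidHom fun c hc => by
      have hc₀ : c = 0 := (map_eq_zero_iff _ hM.nu.1).1 <| LinearMap.ext fun φ =>
        character_ext fun t => (congrArg c (hg φ t)).symm.trans (DFunLike.congr_fun hc _)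
      rw [hc₀, character_zero_apply]
  have hlift : Surjective (homMap S T g) := fun φ =>
    ⟨Finsupp.lsingle φ, LinearMap.ext (hg φ)⟩
  have hs := IsShortExact.ker_subtype hsurj
  exact ⟨_, .of Rᵐᵒᵖ (LinearMap.ker g), _, g, hs,
    hs.isBassModule₁ hlift (hW.isBassModule_finsupp hR _) hM, hlift⟩

/-! ## Transfer of `Ext`-vanishing from `T` to the Bass class -/

section Transfer

/-- The right `S`-module `N` has flat dimension at most `n`, expressed by the vanishing of
`Tor_i(N, Y)` for `i > n` and `Y` finitely presented; the `Tor` is written as `Ext` into the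
character module of `Y`. -/
def TorDimLE (S : Type u) [Ring S] (N : Type u) [AddCommGroup N] [Module Sᵐᵒᵖ N] (n : ℕ) : Prop :=
  ∀ (j : ℕ) (Y : Type u) [AddCommGroup Y] [Module S Y] [Module.FinitePresentation S Y],
    ExtZero Sᵐᵒᵖ N (CharacterModule Y) (n + j + 1)

namespace TorDimLE

variable {S : Type u} [Ring S] {N P K : Type u} [AddCommGroup N] [Module Sᵐᵒᵖ N]
  [AddCommGroup P] [Module Sᵐᵒᵖ P] [AddCommGroup K] [Module Sᵐᵒᵖ K]

theorem of_projective (hN : Module.Projective Sᵐᵒᵖ N) (n : ℕ) : TorDimLE S N n :=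
  fun j _ _ _ _ => .of_projective hN (n + j)

theorem mono {m n : ℕ} (hmn : m ≤ n) (hN : TorDimLE S N m) : TorDimLE S N n := by
  intro j Y _ _ _
  obtain ⟨k, rfl⟩ := Nat.exists_eq_add_of_le hmn
  rw [Nat.add_assoc m]
  exact hN (k + j) Y

theorem syzygy {f : K →ₗ[Sᵐᵒᵖ] P} {g : P →ₗ[Sᵐᵒᵖ] N} (h : IsShortExact f g)
    (hP : Module.Projective Sᵐᵒᵖ P) {n : ℕ} (hN : TorDimLE S N (n + 1)) : TorDimLE S K n := by
  intro j Y _ _ _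
  refine h.extZero_left₁ (.of_projective hP (n + j)) ?_
  rw [← Nat.add_right_comm n 1 j]
  exact hN j Y

end TorDimLE

theorem exists_charDual_comp_eq {S : Type u} [Ring S] {N X Y Z : Type u}
    [AddCommGroup N] [Module Sᵐᵒᵖ N] [AddCommGroup X] [Module S X] [AddCommGroup Y] [Module S Y]
    [AddCommGroup Z] [Module S Z] {f : X →ₗ[S] Y} {g : Y →ₗ[S] Z} (hfg : Exact f g)
    (hN : ExtZero Sᵐᵒᵖ N (CharacterModule (Z ⧸ LinearMap.range g)) 1)
    {h : N →ₗ[Sᵐᵒᵖ] CharacterModule Y} (hh : (charDual f).comp h = 0) :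
    ∃ k : N →ₗ[Sᵐᵒᵖ] CharacterModule Z, (charDual g).comp k = h := by
  have hfg' : Exact f.toAddMonoidHom g.rangeRestrict.toAddMonoidHom := fun y =>
    Subtype.ext_iff.trans (hfg y)
  obtain ⟨k, rfl⟩ := exists_lift_of_exact (f := charDual g.rangeRestrict) (g := charDual f)
    (exact_charMap_iff.2 hfg') (IsShortExact.ker_subtype
      g.surjective_rangeRestrict).isShortExact_charDual.injective hh
  obtain ⟨k, rfl⟩ :=
    (IsShortExact.subtype_mkQ (LinearMap.range g)).isShortExact_charDual.exists_lift hN k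
  exact ⟨k, rfl⟩

variable {S A : Type u} [Ring S] [Ring A]
  {T : Type u} [AddCommGroup T] [Module S T] [Module A T] [SMulCommClass A S T]

theorem finitePresentation_pi_hom [Module.FinitePresentation S T] (n : ℕ) :
    Module.FinitePresentation S ((Fin n → A) →ₗ[A] T) :=
  .of_equiv (LinearEquiv.piRing A T (Fin n) S).symm

variable [SMulCommClass S A T]
  {M : Type u} [AddCommGroup M] [Module A M] {X Y : Type u} [AddCommGroup X] [Module A X]
  [AddCommGroup Y] [Module A Y]

variable (S A T M X) in
/-- The character dual of the composition map `Hom_A(T, M) ⊗_S Hom_A(X, T) → Hom_A(X, M)`. -/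
def compositionDual :
    CharacterModule (X →ₗ[A] M) →+ ((T →ₗ[A] M) →ₗ[Sᵐᵒᵖ] CharacterModule (X →ₗ[A] T)) where
  toFun c :=
    { toFun f := AddMonoidHom.mk' (fun φ => c (f.comp φ)) fun φ φ' => by
        rw [LinearMap.comp_add, map_add]
      map_add' f f' := character_ext fun φ => map_add c (f.comp φ) (f'.comp φ)
      map_smul' _ _ := rfl }
  map_zero' := rfl
  map_add' _ _ := rfl

theorem compositionDual_pi_injective (hM : Injective (nuDual S A T M)) (n : ℕ) :
    Injective (compositionDual S A T M (Fin n → A)) := by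
  refine (injective_iff_map_eq_zero _).2 fun c hc => character_ext fun ψ => ?_
  have hc₀ (i : Fin n) : charMap (coordHom (B := A) ℤ M i).toAddMonoidHom c = 0 := by
    refine (map_eq_zero_iff _ hM).1 (LinearMap.ext fun f => character_ext fun t => ?_)
    refine Eq.trans ?_ (DFunLike.congr_fun (LinearMap.congr_fun hc f) (coordHom S T i t))
    refine congrArg c (LinearMap.ext fun v => ?_)
    rw [LinearMap.comp_apply, coordHom_apply, map_smul]
    exact coordHom_apply ℤ M i (f t) v
  rw [← sum_coordHom ℤ M ψ, map_sum]
  exact Finset.sum_eq_zero fun i _ => DFunLike.congr_fun (hc₀ i) (ψ (Pi.single i 1))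

theorem compositionDual_pi_surjective (hM : Surjective (nuDual S A T M)) (n : ℕ) :
    Surjective (compositionDual S A T M (Fin n → A)) := by
  intro h
  choose c hc using fun i => hM ((charDual (coordHom S T i)).comp h)
  let evalSingle (i : Fin n) : ((Fin n → A) →ₗ[A] M) →+ M :=
    (LinearMap.applyₗ' ℤ (Pi.single i 1)).toAddMonoidHom
  refine ⟨∑ i, charMap (evalSingle i) (c i), LinearMap.ext fun f => character_ext fun φ => ?_⟩
  calc (∑ i, charMap (evalSingle i) (c i)) (f.comp φ)
      = ∑ i, c i (f (φ (Pi.single i 1))) := AddMonoidHom.finsetSum_apply _ _ _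
    _ = ∑ i, h f (coordHom S T i (φ (Pi.single i 1))) := Finset.sum_congr rfl fun i _ =>
        DFunLike.congr_fun (LinearMap.congr_fun (hc i) f) (φ (Pi.single i 1))
    _ = h f φ := by rw [← map_sum, sum_coordHom]

theorem compositionDual_injective [Module.FinitePresentation S T]
    (hM : Bijective (nuDual S A T M)) (htor : TorDimLE S (T →ₗ[A] M) 0)
    [Module.FinitePresentation A X] : Injective (compositionDual S A T M X) := by
  refine (injective_iff_map_eq_zero _).2 fun c hc => ?_
  obtain ⟨n, m, q, p, hq, hpq⟩ := Module.FinitePresentation.exists_fin' A X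
  have hqM : Injective (LinearMap.lcomp ℤ M q) := fun ψ ψ' => (LinearMap.cancel_right hq).1
  obtain ⟨c₁, rfl⟩ := charMap_surjective (f := (LinearMap.lcomp ℤ M q).toAddMonoidHom) hqM c
  have := finitePresentation_pi_hom (S := S) (A := A) (T := T) n
  have := finitePresentation_pi_hom (S := S) (A := A) (T := T) m
  have : Module.FinitePresentation S
      (((Fin m → A) →ₗ[A] T) ⧸ LinearMap.range (LinearMap.lcomp S T p)) :=
    Module.finitePresentation_of_surjective _ (Submodule.mkQ_surjective _) <| by
      rw [Submodule.ker_mkQ]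
      exact Module.Finite.iff_fg.1 inferInstance
  obtain ⟨k, hk⟩ := exists_charDual_comp_eq (h := compositionDual S A T M _ c₁)
    (exact_lcomp_of_surjective (A := S) hpq hq) (htor 0 _) hc
  obtain ⟨c₂, rfl⟩ := compositionDual_pi_surjective hM.2 m k
  obtain rfl : charMap (LinearMap.lcomp ℤ M p).toAddMonoidHom c₂ = c₁ :=
    compositionDual_pi_injective hM.1 n hk
  refine character_ext fun ψ => ?_
  change c₂ ((ψ.comp q).comp p) = 0
  rw [LinearMap.comp_assoc, hpq.linearMap_comp_eq_zero, LinearMap.comp_zero, map_zero]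

variable [IsNoetherianRing A] [Module.FinitePresentation S T]

theorem extZero_one_of_torDimLE_zero (hM : Bijective (nuDual S A T M))
    (htor : TorDimLE S (T →ₗ[A] M) 0) [Module.Finite A X] (h : ExtZero A X T 1) :
    ExtZero A X M 1 := by
  obtain ⟨n, q, hq⟩ := Module.Finite.exists_fin' A X
  have hs := IsShortExact.ker_subtype hq
  have := Module.finitePresentation_of_finite A (LinearMap.ker q)
  refine hs.extZero_one_of_exists_extension (.of_projective inferInstance 0) fun φ => ?_
  refine mem_range_of_forall_charMap_eq_zero
    (LinearMap.lcomp ℤ M (LinearMap.ker q).subtype).toAddMonoidHom fun c hc => ?_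
  have hc₀ : c = 0 := by
    refine (map_eq_zero_iff _ (compositionDual_injective hM htor)).1 <|
      LinearMap.ext fun f => character_ext fun φ => ?_
    obtain ⟨φ, rfl⟩ := lcomp_surjective (A := S) hs h φ
    exact DFunLike.congr_fun hc (f.comp φ)
  rw [hc₀, character_zero_apply]

theorem extZero_of_torDimLE_zero (hM : Bijective (nuDual S A T M))
    (htor : TorDimLE S (T →ₗ[A] M) 0) (i : ℕ) [Module.Finite A X] (h : ExtZero A X T (i + 1)) :
    ExtZero A X M (i + 1) := by
  induction i generalizing X with
  | zero => exact extZero_one_of_torDimLE_zero hM htor h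
  | succ i ih =>
    obtain ⟨n, q, hq⟩ := Module.Finite.exists_fin' A X
    have hs := IsShortExact.ker_subtype hq
    exact hs.extZero_left₃ (ih (hs.extZero_left₁ (.of_projective inferInstance i) h))
      (.of_projective inferInstance _)

theorem extZero_of_injDimLE_of_torDimLE_zero (hM : Bijective (nuDual S A T M))
    (htor : TorDimLE S (T →ₗ[A] M) 0) {r : ℕ} (hr : InjDimLE A T r) (j : ℕ) :
    ExtZero A X M (r + j + 1) :=
  extZero_of_forall_finite_extZero
    (fun _ _ _ _ => extZero_of_torDimLE_zero hM htor r (hr.extZero 0)) j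

end Transfer

/-! ## Vanishing of `Ext` into the Bass class in high degrees -/

section FinsuppLeft

variable {A : Type u} [Ring A] {W X Y Z : Type u} [AddCommGroup W] [Module A W]
  [AddCommGroup X] [Module A X] [AddCommGroup Y] [Module A Y] [AddCommGroup Z] [Module A Z]

theorem IsShortExact.finsupp {f : X →ₗ[A] Y} {g : Y →ₗ[A] Z} (h : IsShortExact f g)
    (I : Type u) :
    IsShortExact (Finsupp.mapRange.linearMap (α := I) f)
      (Finsupp.mapRange.linearMap (α := I) g) where
  injective := Finsupp.mapRange_injective _ (map_zero f) h.injective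
  surjective := Finsupp.mapRange_surjective _ (map_zero g) h.surjective
  exact := by
    rw [LinearMap.exact_iff, Finsupp.ker_mapRange, h.exact.linearMap_ker_eq,
      Finsupp.range_mapRange_linearMap _ (LinearMap.ker_eq_bot.2 h.injective)]

theorem extZero_finsupp_left (I : Type u) (i : ℕ) (h : ExtZero A X W (i + 1)) :
    ExtZero A (I →₀ X) W (i + 1) := by
  have hs := IsShortExact.ker_subtype (Finsupp.linearCombination_id_surjective A X)
  induction i generalizing X with
  | zero =>
    refine (hs.finsupp I).extZero_one_of_exists_extension (.of_projective inferInstance 0)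
      fun φ => ?_
    choose ψ hψ using fun i => hs.exists_extension h (φ.comp (Finsupp.lsingle i))
    refine ⟨Finsupp.lsum ℕ ψ, Finsupp.lhom_ext fun i x => ?_⟩
    simpa using LinearMap.congr_fun (hψ i) x
  | succ i ih =>
    exact (hs.finsupp I).extZero_left₃ (ih (hs.extZero_left₁ (.of_projective inferInstance i) h)
      (.ker_subtype (Finsupp.linearCombination_id_surjective A _))) (.of_projective inferInstance _)

end FinsuppLeft

section HighDegrees

variable {S R : Type u} [Ring S] [Ring R]
  {T : Type u} [AddCommGroup T] [Module S T] [Module Rᵐᵒᵖ T] [SMulCommClass S Rᵐᵒᵖ T]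
  {M W : Type u} [AddCommGroup M] [Module Rᵐᵒᵖ M] [AddCommGroup W] [Module Rᵐᵒᵖ W]

theorem extZero_finsupp_of_injDimLE (hW : IsWakamatsuTilting S R T)
    (hR : IsRightNoetherianRing R) {r : ℕ} (hr : InjDimLE Rᵐᵒᵖ T r) (I : Type u) (j : ℕ) :
    ExtZero Rᵐᵒᵖ W (I →₀ T) (r + j + 1) := by
  have := SMulCommClass.symm S Rᵐᵒᵖ T
  have := hR.isNoetherianRing
  have := hW.finitePresentation_left
  exact extZero_of_injDimLE_of_torDimLE_zero (hW.isBassModule_finsupp hR I).nu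
    (.of_projective (hW.projective_hom_finsupp I) 0) hr j

theorem IsBassModule.extZero_of_torDimLE (hW : IsWakamatsuTilting S R T)
    (hR : IsRightNoetherianRing R) {n : ℕ} (hM : IsBassModule S Rᵐᵒᵖ T M)
    (htor : TorDimLE S (T →ₗ[Rᵐᵒᵖ] M) n)
    (hext : ∀ (K : Type u) [AddCommGroup K] [Module Rᵐᵒᵖ K], IsBassModule S Rᵐᵒᵖ T K →
      TorDimLE S (T →ₗ[Rᵐᵒᵖ] K) 0 → ExtZero Rᵐᵒᵖ M K (n + 1))
    (hBW : IsBassModule S Rᵐᵒᵖ T W) (j : ℕ) : ExtZero Rᵐᵒᵖ M W (n + j + 1) := by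
  obtain ⟨I, K, f, g, hs, hK, hlift⟩ := hM.exists_cover hW hR
  have hhom := hs.isShortExact_homMap S hlift
  have hproj := hW.projective_hom_finsupp I
  induction n generalizing M I K with
  | zero =>
    obtain ⟨s, hs⟩ := hs.exists_lift (hext K hK (.syzygy hhom hproj (htor.mono zero_le_one)))
      LinearMap.id
    rw [zero_add]
    exact (extZero_finsupp_left I j (hBW.ext j)).of_leftInverse hs
  | succ n ih =>
    obtain ⟨I', K', f', g', hs', hK', hlift'⟩ := hK.exists_cover hW hR
    rw [Nat.add_right_comm n 1 j]
    refine hs.extZero_left₃ (ih hK (.syzygy hhom hproj htor) (fun L _ _ hL hL₀ => ?_)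
      I' K' f' g' hs' hK' hlift' (hs'.isShortExact_homMap S hlift') (hW.projective_hom_finsupp I'))
      (extZero_finsupp_left I _ (hBW.ext _))
    exact hs.extZero_left₁ (extZero_finsupp_left I n (hL.ext n)) (hext L hL hL₀)

theorem IsBassModule.extZero_of_injective (hW : IsWakamatsuTilting S R T)
    (hR : IsRightNoetherianRing R) (hS : IsLeftCoherentRing S) {d r : ℕ} (hd : InjDimLE S T d)
    (hr : InjDimLE Rᵐᵒᵖ T r) {E : Type u} [AddCommGroup E] [Module Rᵐᵒᵖ E]
    (hE : Module.Injective Rᵐᵒᵖ E) (hBW : IsBassModule S Rᵐᵒᵖ T W) (j : ℕ) :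
    ExtZero Rᵐᵒᵖ E W (max d r + j + 1) := by
  have := SMulCommClass.symm S Rᵐᵒᵖ T
  have := hR.isNoetherianRing
  have := hW.finitePresentation_left
  have htor : TorDimLE S (T →ₗ[Rᵐᵒᵖ] E) d := fun j Y _ _ _ =>
    extZero_character_of_injective hE hS (d + j) (hd.extZero j)
  refine (hW.isBassModule_of_injective hS hE).extZero_of_torDimLE hW hR
    (htor.mono (le_max_left d r)) (fun K _ _ hK hK₀ => ?_) hBW j
  rw [← Nat.add_sub_of_le (le_max_right d r)]
  exact extZero_of_injDimLE_of_torDimLE_zero hK.nu hK₀ hr _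

end HighDegrees

/-! ## Construction of Gorenstein injective modules -/

theorem exists_int_sequence {α : Type*} {r : α → α → Prop} {p : α → Prop}
    (hr : ∀ x, p x → ∃ y, p y ∧ r x y) (hl : ∀ x, p x → ∃ y, p y ∧ r y x) {x : α} (hx : p x) :
    ∃ z : ℤ → α, z 0 = x ∧ (∀ i, p (z i)) ∧ ∀ i, r (z i) (z (i + 1)) := by
  choose! F hpF hrF using hr
  choose! G hpG hrG using hl
  have hpF' : ∀ n, p (F^[n] x) := fun n => by
    induction n with
    | zero => exact hx
    | succ n ih => exact iterate_succ_apply' F n x ▸ hpF _ ih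
  have hpG' : ∀ n, p (G^[n] x) := fun n => by
    induction n with
    | zero => exact hx
    | succ n ih => exact iterate_succ_apply' G n x ▸ hpG _ ih
  refine ⟨fun | .ofNat n => F^[n] x | .negSucc n => G^[n + 1] x, rfl, ?_, ?_⟩
  · rintro (n | n)
    exacts [hpF' n, hpG' (n + 1)]
  · rintro (n | _ | n)
    · change r (F^[n] x) (F^[n + 1] x)
      rw [iterate_succ_apply']
      exact hrF _ (hpF' n)
    · exact hrG x hx
    · change r (G^[n + 1 + 1] x) (G^[n + 1] x)
      rw [iterate_succ_apply' G (n + 1)]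
      exact hrG _ (hpG' (n + 1))

section Gorenstein

variable {A : Type u} [Ring A]

section Splice

variable {Z J : ℤ → ModuleCat.{u} A} {f : ∀ i, Z i →ₗ[A] J i} {g : ∀ i, J i →ₗ[A] Z (i + 1)}

/-- The complex `⋯ → J i → J (i + 1) → ⋯` whose differentials factor as
`J i → Z (i + 1) → J (i + 1)`. -/
abbrev ZComplex.splice (f : ∀ i, Z i →ₗ[A] J i) (g : ∀ i, J i →ₗ[A] Z (i + 1)) :
    ZComplex A where
  P i := J i
  d i := (f (i + 1)).comp (g i)

theorem ZComplex.splice_isExact (h : ∀ i, IsShortExact (f i) (g i)) :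
    (ZComplex.splice f g).IsExact := fun i =>
  (h i).surjective.comp_exact_iff_exact.2
    ((h (i + 1 + 1)).injective.comp_exact_iff_exact.2 (h (i + 1)).exact)

theorem ZComplex.ker_splice_d (h : ∀ i, IsShortExact (f i) (g i)) (i : ℤ) :
    LinearMap.ker ((ZComplex.splice f g).d i) = LinearMap.range (f i) := by
  rw [LinearMap.ker_comp_of_ker_eq_bot _ (LinearMap.ker_eq_bot.2 (h (i + 1)).injective),
    (h i).exact.linearMap_ker_eq]

theorem ZComplex.splice_hom_exact (h : ∀ i, IsShortExact (f i) (g i)) {I : Type u}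
    [AddCommGroup I] [Module A I] (hI : ∀ i, ExtZero A I (Z i) 1) (i : ℤ) :
    Exact (fun φ : I →ₗ[A] J i => ((ZComplex.splice f g).d i).comp φ)
      (fun φ : I →ₗ[A] J (i + 1) => ((ZComplex.splice f g).d (i + 1)).comp φ) := by
  refine fun φ => ⟨fun hφ => ?_, ?_⟩
  · have hgφ : (g (i + 1)).comp φ = 0 :=
      (LinearMap.cancel_left (h (i + 1 + 1)).injective).1 (by
        rw [LinearMap.comp_zero, ← LinearMap.comp_assoc]
        exact hφ)
    obtain ⟨ψ, rfl⟩ := exists_lift_of_exact (h (i + 1)).exact (h (i + 1)).injective hgφ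
    obtain ⟨χ, rfl⟩ := (h i).exists_lift (hI i) ψ
    exact ⟨χ, rfl⟩
  · rintro ⟨ψ, rfl⟩
    exact LinearMap.ext fun x => (ZComplex.splice_isExact h i).apply_apply_eq_zero (ψ x)

end Splice

/-- `K` is a first cosyzygy of `Z`: the cokernel of an embedding of `Z` in an injective module. -/
def IsCosyzygy (Z K : ModuleCat.{u} A) : Prop :=
  ∃ (J : ModuleCat.{u} A) (f : Z →ₗ[A] J) (g : J →ₗ[A] K), Module.Injective A J ∧ IsShortExact f g

theorem isGorensteinInjective_of_cosyzygy_closed {G : ModuleCat.{u} A → Prop}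
    (hr : ∀ Z, G Z → ∃ Z', G Z' ∧ IsCosyzygy Z Z') (hl : ∀ Z, G Z → ∃ Z', G Z' ∧ IsCosyzygy Z' Z)
    (hG : ∀ Z, G Z → ∀ (I : Type u) [AddCommGroup I] [Module A I], Module.Injective A I →
      ExtZero A I Z 1) {K : ModuleCat.{u} A} (hK : G K) : IsGorensteinInjective A K := by
  obtain ⟨Z, rfl, hZ, hlink⟩ := exists_int_sequence hr hl hK
  choose J f g hJ h using hlink
  refine ⟨ZComplex.splice f g, hJ, ZComplex.splice_isExact h, fun I _ _ hI =>
    ZComplex.splice_hom_exact h fun i => hG _ (hZ i) I hI, ⟨?_⟩⟩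
  exact (LinearEquiv.ofInjective (f 0) (h 0).injective).trans
    (LinearEquiv.ofEq _ _ (ZComplex.ker_splice_d h 0).symm)

theorem injective_prod {E E' : Type u} [AddCommGroup E] [Module A E] [AddCommGroup E']
    [Module A E'] (hE : Module.Injective A E) (hE' : Module.Injective A E') :
    Module.Injective A (E × E') where
  out _ _ _ _ _ _ f hf φ := by
    obtain ⟨a, ha⟩ := hE.out f hf ((LinearMap.fst A E E').comp φ)
    obtain ⟨b, hb⟩ := hE'.out f hf ((LinearMap.snd A E E').comp φ)
    exact ⟨a.prod b, fun x => Prod.ext (ha x) (hb x)⟩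

theorem isGorensteinInjective_of_injective {E : ModuleCat.{u} A} (hE : Module.Injective A E) :
    IsGorensteinInjective A E := by
  have hself (Z : ModuleCat.{u} A) (hZ : Module.Injective A Z) : IsCosyzygy Z Z :=
    ⟨.of A (Z × Z), LinearMap.inl A Z Z, LinearMap.snd A Z Z, injective_prod hZ hZ,
      LinearMap.inl_injective, LinearMap.snd_surjective, .inl_snd⟩
  exact isGorensteinInjective_of_cosyzygy_closed (G := fun Z => Module.Injective A Z)
    (fun Z hZ => ⟨Z, hZ, hself Z hZ⟩) (fun Z hZ => ⟨Z, hZ, hself Z hZ⟩)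
    (fun _ hZ _ _ _ _ => ExtZero.of_injective hZ 0) hE

/-- `K` is an `n`-th cosyzygy of `Z`, for some choice of injective embeddings. -/
def IsNthCosyzygy : ℕ → ModuleCat.{u} A → ModuleCat.{u} A → Prop
  | 0, Z, K => Z = K
  | n + 1, Z, K => ∃ Z₁, IsCosyzygy Z Z₁ ∧ IsNthCosyzygy n Z₁ K

theorem isCosyzygy_range_mkQ {Z E : ModuleCat.{u} A} {f : Z →ₗ[A] E} (hE : Module.Injective A E)
    (hf : Injective f) : IsCosyzygy Z (.of A (E ⧸ LinearMap.range f)) :=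
  ⟨E, f, _, hE, IsShortExact.range_mkQ hf⟩

theorem exists_isCosyzygy (Z : ModuleCat.{u} A) : ∃ K, IsCosyzygy Z K := by
  obtain ⟨E, f, hf, hE⟩ := exists_injective_embedding A Z
  exact ⟨_, isCosyzygy_range_mkQ hE hf⟩

theorem hasClassCoresolution_of_forall_isNthCosyzygy {G : ModuleCat.{u} A → Prop}
    (hG : ∀ E : ModuleCat.{u} A, Module.Injective A E → G E) {n : ℕ} {M : ModuleCat.{u} A}
    (hM : ∀ K, IsNthCosyzygy n M K → G K) : HasClassCoresolution A G n M := by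
  induction n generalizing M with
  | zero => exact hM M rfl
  | succ n ih =>
    obtain ⟨E, f, hf, hE⟩ := exists_injective_embedding A M
    exact ⟨⟨E, f, hf⟩, hG E hE, ih fun K hK => hM K ⟨_, isCosyzygy_range_mkQ hE hf, hK⟩⟩

theorem IsNthCosyzygy.extZero {n : ℕ} {Z K : ModuleCat.{u} A} (h : IsNthCosyzygy n Z K)
    {W : Type u} [AddCommGroup W] [Module A W] {i : ℕ} (hZ : ExtZero A W Z (n + i + 1)) :
    ExtZero A W K (i + 1) := by
  induction n generalizing Z with
  | zero =>
    obtain rfl : Z = K := h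
    rwa [zero_add] at hZ
  | succ n ih =>
    obtain ⟨Z₁, ⟨J, f, g, hJ, hfg⟩, h₁⟩ := h
    rw [Nat.add_right_comm n 1 i] at hZ
    exact ih h₁ (hfg.extZero_right₃ hZ (ExtZero.of_injective hJ _))

theorem IsNthCosyzygy.exists_isNthCosyzygy_of_isCosyzygy {n : ℕ} {Z K K' : ModuleCat.{u} A}
    (h : IsNthCosyzygy n Z K) (hK : IsCosyzygy K K') :
    ∃ Z', IsCosyzygy Z Z' ∧ IsNthCosyzygy n Z' K' := by
  induction n generalizing Z with
  | zero =>
    obtain rfl : Z = K := h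
    exact ⟨K', hK, rfl⟩
  | succ n ih =>
    obtain ⟨Z₁, hZ, h₁⟩ := h
    obtain ⟨Z₂, hZ₂, h₂⟩ := ih h₁
    exact ⟨Z₁, hZ, Z₂, hZ₂, h₂⟩

section Horseshoe

variable {X₁ X₂ X₃ E₁ E₃ C₁ C₃ : Type u} [AddCommGroup X₁] [Module A X₁] [AddCommGroup X₂]
  [Module A X₂] [AddCommGroup X₃] [Module A X₃] [AddCommGroup E₁] [Module A E₁] [AddCommGroup E₃]
  [Module A E₃] [AddCommGroup C₁] [Module A C₁] [AddCommGroup C₃] [Module A C₃]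
  {f : X₁ →ₗ[A] X₂} {g : X₂ →ₗ[A] X₃} {i₁ : X₁ →ₗ[A] E₁} {p₁ : E₁ →ₗ[A] C₁} {i₃ : X₃ →ₗ[A] E₃}
  {p₃ : E₃ →ₗ[A] C₃} {a : X₂ →ₗ[A] E₁}

theorem injective_prod_comp_of_exact (h : Exact f g) (h₁ : Injective i₁) (h₃ : Injective i₃)
    (ha : a.comp f = i₁) : Injective (a.prod (i₃.comp g)) := by
  refine (injective_iff_map_eq_zero _).2 fun x hx => ?_
  obtain ⟨hax, hgx⟩ := Prod.mk.inj hx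
  obtain ⟨y, rfl⟩ := (h x).1 (h₃ (hgx.trans (map_zero i₃).symm))
  rw [h₁ ((LinearMap.congr_fun ha y).symm.trans (hax.trans (map_zero i₁).symm)), map_zero]

theorem IsShortExact.exists_cokernel_horseshoe (h : IsShortExact f g) (h₁ : IsShortExact i₁ p₁)
    (h₃ : IsShortExact i₃ p₃) (ha : a.comp f = i₁) {C₂ : Type u} [AddCommGroup C₂] [Module A C₂]
    {p₂ : E₁ × E₃ →ₗ[A] C₂} (h₂ : IsShortExact (a.prod (i₃.comp g)) p₂) :
    ∃ (f' : C₁ →ₗ[A] C₂) (g' : C₂ →ₗ[A] C₃), IsShortExact f' g' := by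
  have haf (x : X₁) : a (f x) = i₁ x := LinearMap.congr_fun ha x
  obtain ⟨f', hf'⟩ := exists_desc_of_exact h₁.exact h₁.surjective
    (φ := p₂.comp (LinearMap.inl A E₁ E₃)) <| LinearMap.ext fun x =>
      (h₂.exact _).2 ⟨f x, Prod.ext (haf x) (by
        simp [h.exact.apply_apply_eq_zero])⟩
  obtain ⟨g', hg'⟩ := exists_desc_of_exact h₂.exact h₂.surjective
    (φ := p₃.comp (LinearMap.snd A E₁ E₃)) <| LinearMap.ext fun x =>
      h₃.exact.apply_apply_eq_zero (g x)
  have hf'p (e : E₁) : f' (p₁ e) = p₂ (e, 0) := LinearMap.congr_fun hf' e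
  have hg'p (e : E₁ × E₃) : g' (p₂ e) = p₃ e.2 := LinearMap.congr_fun hg' e
  refine ⟨f', g', (injective_iff_map_eq_zero f').2 fun c hc => ?_, fun c => ?_, fun c => ⟨?_, ?_⟩⟩
  · obtain ⟨e, rfl⟩ := h₁.surjective c
    obtain ⟨x, hx⟩ := (h₂.exact _).1 ((hf'p e).symm.trans hc)
    obtain ⟨hax, hgx⟩ := Prod.mk.inj hx
    obtain ⟨y, rfl⟩ := (h.exact x).1 (h₃.injective (hgx.trans (map_zero i₃).symm))
    exact (h₁.exact e).2 ⟨y, (haf y).symm.trans hax⟩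
  · obtain ⟨e, rfl⟩ := h₃.surjective c
    exact ⟨p₂ (0, e), hg'p (0, e)⟩
  · obtain ⟨⟨e₁, e₃⟩, rfl⟩ := h₂.surjective c
    intro hc
    obtain ⟨z, rfl⟩ := (h₃.exact e₃).1 ((hg'p _).symm.trans hc)
    obtain ⟨x, rfl⟩ := h.surjective z
    refine ⟨p₁ (e₁ - a x), ?_⟩
    rw [hf'p, ← sub_eq_zero, ← map_sub]
    exact (h₂.exact _).2 ⟨-x, by simp⟩
  · rintro ⟨d, rfl⟩
    obtain ⟨e, rfl⟩ := h₁.surjective d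
    rw [hf'p, hg'p, map_zero]

end Horseshoe

theorem IsShortExact.exists_isCosyzygy_horseshoe {X₁ X₂ X₃ C₃ : ModuleCat.{u} A}
    {f : X₁ →ₗ[A] X₂} {g : X₂ →ₗ[A] X₃} (h : IsShortExact f g) (h₃ : IsCosyzygy X₃ C₃) :
    ∃ (C₁ C₂ : ModuleCat.{u} A) (f' : C₁ →ₗ[A] C₂) (g' : C₂ →ₗ[A] C₃),
      IsCosyzygy X₁ C₁ ∧ IsCosyzygy X₂ C₂ ∧ IsShortExact f' g' := by
  obtain ⟨E₃, i₃, p₃, hE₃, h₃⟩ := h₃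
  obtain ⟨E₁, i₁, h₁, hE₁⟩ := exists_injective_embedding A X₁
  obtain ⟨a, ha⟩ := Module.Injective.extension_property A _ _ _ f h.injective i₁
  have h₂ := injective_prod_comp_of_exact h.exact h₁ h₃.injective ha
  obtain ⟨f', g', h'⟩ := h.exists_cokernel_horseshoe (.range_mkQ h₁) h₃ ha (.range_mkQ h₂)
  exact ⟨_, _, f', g', isCosyzygy_range_mkQ hE₁ h₁,
    isCosyzygy_range_mkQ (E := .of A (E₁ × E₃)) (injective_prod hE₁ hE₃) h₂, h'⟩

theorem IsShortExact.exists_isNthCosyzygy_horseshoe {n : ℕ} {X₁ X₂ X₃ K₃ : ModuleCat.{u} A}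
    {f : X₁ →ₗ[A] X₂} {g : X₂ →ₗ[A] X₃} (h : IsShortExact f g) (h₃ : IsNthCosyzygy n X₃ K₃) :
    ∃ (K₁ K₂ : ModuleCat.{u} A) (f' : K₁ →ₗ[A] K₂) (g' : K₂ →ₗ[A] K₃),
      IsNthCosyzygy n X₁ K₁ ∧ IsNthCosyzygy n X₂ K₂ ∧ IsShortExact f' g' := by
  induction n generalizing X₁ X₂ X₃ with
  | zero =>
    obtain rfl : X₃ = K₃ := h₃
    exact ⟨X₁, X₂, f, g, rfl, rfl, h⟩
  | succ n ih =>
    obtain ⟨C₃, hC₃, h₃⟩ := h₃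
    obtain ⟨C₁, C₂, f₁, g₁, hC₁, hC₂, hC⟩ := h.exists_isCosyzygy_horseshoe hC₃
    obtain ⟨K₁, K₂, f', g', hK₁, hK₂, hK⟩ := ih hC h₃
    exact ⟨K₁, K₂, f', g', ⟨C₁, hC₁, hK₁⟩, ⟨C₂, hC₂, hK₂⟩, hK⟩

end Gorenstein

section BassToGorenstein

variable {S R : Type u} [Ring S] [Ring R]
  {T : Type u} [AddCommGroup T] [Module S T] [Module Rᵐᵒᵖ T] [SMulCommClass S Rᵐᵒᵖ T]

theorem injective_of_isNthCosyzygy_finsupp (hW : IsWakamatsuTilting S R T)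
    (hR : IsRightNoetherianRing R) {r n : ℕ} (hr : InjDimLE Rᵐᵒᵖ T r) (hrn : r ≤ n) {I : Type u}
    {J : ModuleCat.{u} Rᵐᵒᵖ} (hJ : IsNthCosyzygy n (.of Rᵐᵒᵖ (I →₀ T)) J) :
    Module.Injective Rᵐᵒᵖ J := by
  obtain ⟨k, rfl⟩ := Nat.exists_eq_add_of_le hrn
  exact injective_of_forall_finite_extZero fun _ _ _ _ =>
    hJ.extZero (i := 0) (extZero_finsupp_of_injDimLE hW hR hr I k)

theorem IsBassModule.isGorensteinInjective_of_isNthCosyzygy (hW : IsWakamatsuTilting S R T)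
    (hR : IsRightNoetherianRing R) (hS : IsLeftCoherentRing S) {d r : ℕ} (hd : InjDimLE S T d)
    (hr : InjDimLE Rᵐᵒᵖ T r) {M K : ModuleCat.{u} Rᵐᵒᵖ} (hM : IsBassModule S Rᵐᵒᵖ T M)
    (hK : IsNthCosyzygy (max d r) M K) : IsGorensteinInjective Rᵐᵒᵖ K := by
  refine isGorensteinInjective_of_cosyzygy_closed
    (G := fun K => ∃ Z : ModuleCat.{u} Rᵐᵒᵖ, IsBassModule S Rᵐᵒᵖ T Z ∧ IsNthCosyzygy (max d r) Z K)
    ?_ ?_ ?_ ⟨M, hM, hK⟩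
  · rintro K ⟨Z, hZ, hZK⟩
    obtain ⟨K', hKK'⟩ := exists_isCosyzygy K
    obtain ⟨Z', ⟨J, f, g, hJ, hfg⟩, hZK'⟩ := hZK.exists_isNthCosyzygy_of_isCosyzygy hKK'
    exact ⟨K', ⟨Z', hfg.isBassModule₃ hZ (hW.isBassModule_of_injective hS hJ), hZK'⟩, hKK'⟩
  · rintro K ⟨Z, hZ, hZK⟩
    obtain ⟨I, Z', f, g, hfg, hZ', -⟩ := hZ.exists_cover hW hR
    obtain ⟨K', J, f', g', hZK', hJ, hfg'⟩ :=
      IsShortExact.exists_isNthCosyzygy_horseshoe (X₂ := .of Rᵐᵒᵖ (I →₀ T)) hfg hZK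
    have hJinj := injective_of_isNthCosyzygy_finsupp hW hR hr (le_max_right d r) hJ
    exact ⟨K', ⟨Z', hZ', hZK'⟩, J, f', g', hJinj, hfg'⟩
  · rintro K ⟨Z, hZ, hZK⟩ I _ _ hI
    exact hZK.extZero (i := 0) (IsBassModule.extZero_of_injective hW hR hS hd hr hI hZ 0)

theorem IsBassModule.gidLE (hW : IsWakamatsuTilting S R T) (hR : IsRightNoetherianRing R)
    (hS : IsLeftCoherentRing S) {d r : ℕ} (hd : InjDimLE S T d) (hr : InjDimLE Rᵐᵒᵖ T r)
    {M : Type u} [AddCommGroup M] [Module Rᵐᵒᵖ M] (hM : IsBassModule S Rᵐᵒᵖ T M) :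
    GidLE Rᵐᵒᵖ M (max d r) :=
  hasClassCoresolution_of_forall_isNthCosyzygy (fun _ => isGorensteinInjective_of_injective)
    fun _ hK => isGorensteinInjective_of_isNthCosyzygy hW hR hS hd hr hM hK

end BassToGorenstein

/-! ## Gorenstein injective modules lie in the Bass class -/

theorem IsGorensteinInjective.exists_sequence {A : Type u} [Ring A] {K : Type u} [AddCommGroup K]
    [Module A K] (hK : IsGorensteinInjective A K) :
    ∃ (Z J : ℤ → ModuleCat.{u} A) (f : ∀ i, Z i →ₗ[A] J i) (g : ∀ i, J i →ₗ[A] Z (i + 1)),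
      (∀ i, Module.Injective A (J i)) ∧ (∀ i, IsShortExact (f i) (g i)) ∧
      (∀ i (I : Type u) [AddCommGroup I] [Module A I], Module.Injective A I →
        ExtZero A I (Z i) 1) ∧ Nonempty (K ≃ₗ[A] Z 0) := by
  obtain ⟨C, hC, hexact, hhom, hK⟩ := hK
  let g (i : ℤ) : C.P i →ₗ[A] LinearMap.ker (C.d (i + 1)) :=
    (C.d i).codRestrict _ (hexact i).apply_apply_eq_zero
  have hfg (i : ℤ) : IsShortExact (LinearMap.ker (C.d i)).subtype (g i) :=
    { injective := Subtype.val_injective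
      surjective := fun ⟨y, hy⟩ => ((hexact i y).1 hy).imp fun _ hx => Subtype.ext hx
      exact := LinearMap.exact_iff.2 <|
        (LinearMap.ker_codRestrict _ _ _).trans (Submodule.range_subtype _).symm }
  refine ⟨fun i => .of A (LinearMap.ker (C.d i)), fun i => .of A (C.P i), _, g, hC, hfg,
    fun i I _ _ hI => ?_, hK⟩
  refine (hfg i).extZero_one_of_exists_lift (.of_injective (hC i) 0) fun φ => ?_
  obtain ⟨ψ, hψ⟩ := (hhom I hI i ((LinearMap.ker (C.d (i + 1))).subtype.comp φ)).1
    (LinearMap.ext fun x => (φ x).2)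
  exact ⟨ψ, LinearMap.ext fun x => Subtype.ext (LinearMap.congr_fun hψ x)⟩

theorem HasClassCoresolution.extZero_left {A : Type u} [Ring A] {Y : Type u} [AddCommGroup Y]
    [Module A Y] {G : ModuleCat.{u} A → Prop}
    (hG : ∀ E : ModuleCat.{u} A, G E → ∀ k, ExtZero A E Y (k + 1)) {n : ℕ} {X : ModuleCat.{u} A}
    (hX : HasClassCoresolution A G n X) (k : ℕ) : ExtZero A X Y (k + 1) := by
  induction n generalizing X k with
  | zero => exact hG X hX k
  | succ n ih =>
    obtain ⟨m, hm, hX⟩ := hX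
    exact (IsShortExact.range_mkQ m.inj).extZero_left₁ (hG m.E hm k) (ih hX (k + 1))

theorem forall_int_of_forall_add_one {p : ℤ → Prop} (h : ∀ i, p (i + 1)) (i : ℤ) : p i :=
  sub_add_cancel i 1 ▸ h (i - 1)

section Sequence

variable {A : Type u} [Ring A] {Z J : ℤ → ModuleCat.{u} A} {f : ∀ i, Z i →ₗ[A] J i}
  {g : ∀ i, J i →ₗ[A] Z (i + 1)}

theorem extZero_of_injective_sequence (hJ : ∀ i, Module.Injective A (J i))
    (hfg : ∀ i, IsShortExact (f i) (g i)) {W : Type u} [AddCommGroup W] [Module A W]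
    (hW : ∀ i, ExtZero A W (Z i) 1) (k : ℕ) (i : ℤ) : ExtZero A W (Z i) (k + 1) := by
  induction k generalizing i with
  | zero => exact hW i
  | succ k ih => exact (hfg i).extZero_right₁ (.of_injective (hJ i) _) (ih (i + 1))

variable {S : Type u} [Ring S] {T : Type u} [AddCommGroup T] [Module S T] [Module A T]
  [SMulCommClass S A T]

theorem isBassModule_of_sequence (hJ : ∀ i, IsBassModule S A T (J i))
    (hfg : ∀ i, IsShortExact (f i) (g i)) (hext : ∀ i k, ExtZero A T (Z i) (k + 1)) (i : ℤ) :
    IsBassModule S A T (Z i) := by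
  have hlift (i : ℤ) : Surjective (homMap S T (g i)) := (hfg i).exists_lift (hext i 0)
  have hhom (i : ℤ) := (hfg i).isShortExact_homMap S (hlift i)
  have hinj : ∀ i, Injective (nuDual S A T (Z i)) :=
    forall_int_of_forall_add_one fun i => (hfg i).nuDual_injective₃ (hJ i).nu.1
  have hsurj : ∀ i, Surjective (nuDual S A T (Z i)) :=
    forall_int_of_forall_add_one fun i =>
      (hfg i).nuDual_surjective₃ (hlift i) (hinj i) (hJ i).nu.2
  have hextHom (k : ℕ) : ∀ i, ExtZero Sᵐᵒᵖ (T →ₗ[A] Z i) (CharacterModule T) (k + 1) := by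
    induction k with
    | zero =>
      exact forall_int_of_forall_add_one fun i =>
        (hhom i).extZero_one_of_exists_extension ((hJ i).extHom 0)
          (exists_extension_homMap (hfg i).injective (hsurj i))
    | succ k ih =>
      exact forall_int_of_forall_add_one fun i =>
        (hhom i).extZero_left₃ (ih i) ((hJ i).extHom (k + 1))
  exact ⟨hext i, fun k => hextHom k i, hinj i, hsurj i⟩

end Sequence

section GorensteinToBass

variable {S R : Type u} [Ring S] [Ring R]
  {T : Type u} [AddCommGroup T] [Module S T] [Module Rᵐᵒᵖ T] [SMulCommClass S Rᵐᵒᵖ T]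

theorem IsGorensteinInjective.isBassModule (hW : IsWakamatsuTilting S R T)
    (hS : IsLeftCoherentRing S) {r : ℕ} (hr : InjDimLE Rᵐᵒᵖ T r) {K : Type u} [AddCommGroup K]
    [Module Rᵐᵒᵖ K] (hK : IsGorensteinInjective Rᵐᵒᵖ K) : IsBassModule S Rᵐᵒᵖ T K := by
  obtain ⟨Z, J, f, g, hJ, hfg, hZ, ⟨e⟩⟩ := hK.exists_sequence
  have hJB (i : ℤ) := hW.isBassModule_of_injective hS (hJ i)
  have hext (i : ℤ) : ∀ k, ExtZero Rᵐᵒᵖ T (Z i) (k + 1) :=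
    HasClassCoresolution.extZero_left (fun E hE k =>
      extZero_of_injective_sequence hJ hfg (fun i => hZ i E hE) k i) hr
  have hKfg : IsShortExact ((f 0).comp e.toLinearMap) (g 0) :=
    { injective := (hfg 0).injective.comp e.injective
      surjective := (hfg 0).surjective
      exact := e.surjective.comp_exact_iff_exact.2 (hfg 0).exact }
  exact hKfg.isBassModule₁ ((hfg 0).exists_lift (hext 0 0)) (hJB 0)
    (isBassModule_of_sequence hJB hfg hext (0 + 1))

theorem isBassModule_of_gidLE (hW : IsWakamatsuTilting S R T) (hT : TensorReflectsZero S T)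
    (hS : IsLeftCoherentRing S) {r : ℕ} (hr : InjDimLE Rᵐᵒᵖ T r) {n : ℕ} {M : ModuleCat.{u} Rᵐᵒᵖ}
    (hM : GidLE Rᵐᵒᵖ M n) : IsBassModule S Rᵐᵒᵖ T M := by
  induction n generalizing M with
  | zero => exact IsGorensteinInjective.isBassModule hW hS hr hM
  | succ n ih =>
    obtain ⟨m, hm, hq⟩ := hM
    exact (IsShortExact.range_mkQ m.inj).isBassModule₁_of_tensorReflectsZero hT
      (hm.isBassModule hW hS hr) (ih (M := .of Rᵐᵒᵖ _) hq)

end GorensteinToBass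

theorem wakamatsu_bass_iff_finite_Gid_general
    (S R : Type u) [Ring S] [Ring R]
    (T : Type u) [AddCommGroup T] [Module S T] [Module Rᵐᵒᵖ T] [SMulCommClass S Rᵐᵒᵖ T]
    (hW : IsWakamatsuTilting S R T) (hT : TensorReflectsZero S T)
    (hRnoeth : IsRightNoetherianRing R) (hScoh : IsLeftCoherentRing S)
    (hidR : ∃ n, InjDimLE Rᵐᵒᵖ T n) (hidS : ∃ n, InjDimLE S T n)
    (M : Type u) [AddCommGroup M] [Module Rᵐᵒᵖ M] :
    InBassClass S R T M ↔ ∃ n, GidLE Rᵐᵒᵖ M n := by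
  obtain ⟨r, hr⟩ := hidR
  obtain ⟨d, hd⟩ := hidS
  rw [inBassClass_iff_isBassModule]
  constructor
  · exact fun hM => ⟨max d r, hM.gidLE hW hRnoeth hScoh hd hr⟩
  · rintro ⟨n, hM⟩
    exact isBassModule_of_gidLE (M := .of Rᵐᵒᵖ M) hW hT hScoh hr hM

/-- Let `T` be a tensorly faithful Wakamatsu tilting `(S,R)`-bimodule, with
`R` right Noetherian and `S` left coherent, such that `id(T_R) < ∞` and `id(_S T) < ∞`.
Then for a right `R`-module `M` we have `M ∈ ℬ_T(R)` iff `Gid(M) < ∞`. -/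
theorem wakamatsu_bass_iff_finite_Gid
    (S R : Type u) [Ring S] [Ring R]
    (T : Type u) [AddCommGroup T] [Module S T] [Module Rᵐᵒᵖ T] [SMulCommClass S Rᵐᵒᵖ T]
    (hW : IsWakamatsuTilting S R T) (htf : IsTensorlyFaithful S R T)
    (hRnoeth : IsRightNoetherianRing R) (hScoh : IsLeftCoherentRing S)
    (hidR : ∃ n, InjDimLE Rᵐᵒᵖ T n) (hidS : ∃ n, InjDimLE S T n)
    (M : Type u) [AddCommGroup M] [Module Rᵐᵒᵖ M] :
    InBassClass S R T M ↔ ∃ n, GidLE Rᵐᵒᵖ M n :=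
  wakamatsu_bass_iff_finite_Gid_general S R T hW htf.2 hRnoeth hScoh hidR hidS M
end
end

section
/- Let S be a left coherent ring and N a right S-module, and let ℒ be the class of all right S-modules of finite flat dimension. If Ext^i_S(N, L) = 0 for every L ∈ ℒ and all i > 0, then there exists an ℒ-preenvelope f : N → P in which P is a projective right S-module. -/
open Function MulOpposite

universe u

noncomputable section

/-!
A right module `F` is flat iff its character module `F⋆` is injective (Lambek). By this duality,
the kernel of an epimorphism between flat modules is flat, and `F` is flat iff every relation
`∑ xᵢ sᵢ = 0` in `F` is a consequence of left relations among the `sᵢ`. Over a left coherent ring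
those left relations are finitely generated, so that products of flat modules are flat (Chase).

If `Ext¹(N, -)` vanishes on `ℒ`, then every map from `N` to a member `L` of `ℒ` lifts to the first
term `F` of a flat resolution of `L`, from there to the free module on the set `F`, and hence
factors through the free module `C` on `N × ℕ`, because each element of `N` is sent to a combination
of finitely many basis elements. Since `C` does not depend on `L`, every map from `N` into `ℒ`
factors through the canonical map from `N` to the power `D` of `C` indexed by `Hom(N, C)`. The
module `D` is flat, so this map lifts to the free module on the set `D`, and the lift is a
preenvelope.
-/

/-! ## Character modules of right modules -/

section Character

variable {S : Type u} [Ring S]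
variable {F : Type u} [AddCommGroup F] [Module Sᵐᵒᵖ F]
variable {X Y : Type u} [AddCommGroup X] [Module S X] [AddCommGroup Y] [Module S Y]

/-- The left `S`-module structure on the character module `F⋆ = Hom_ℤ(F, ℚ/ℤ)` of a right
`S`-module `F`, given by `(s • χ) n = χ (n s)`. -/
instance instModuleCharacterModuleOfMulOpposite : Module S (CharacterModule F) where
  smul s χ := AddMonoidHom.comp χ (DistribSMul.toAddMonoidHom F (op s))
  one_smul χ := DFunLike.ext _ _ fun n => congrArg χ (one_smul Sᵐᵒᵖ n)
  mul_smul s t χ := DFunLike.ext _ _ fun n => congrArg χ (mul_smul (op t) (op s) n)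
  smul_zero _ := rfl
  smul_add _ _ _ := rfl
  add_smul s t χ := DFunLike.ext _ _ fun n =>
    (congrArg χ (add_smul (op s) (op t) n)).trans (map_add χ _ _)
  zero_smul χ := DFunLike.ext _ _ fun n =>
    (congrArg χ (zero_smul Sᵐᵒᵖ n)).trans (map_zero χ)

@[simp] theorem characterModule_zero_apply (n : F) : (0 : CharacterModule F) n = 0 := rfl

@[simp] theorem characterModule_sum_apply {ι : Type*} (s : Finset ι) (χ : ι → CharacterModule F)
    (n : F) : (∑ i ∈ s, χ i) n = ∑ i ∈ s, χ i n :=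
  AddMonoidHom.finsetSum_apply χ s n

@[simp] theorem characterModule_smul_apply (s : S) (χ : CharacterModule F) (n : F) :
    (s • χ) n = χ (op s • n) := rfl

theorem MTensor.mk_add_left_s6 (n n' : F) (t : X) :
    (MTensor.mk (n + n') t : MTensor S F X) = MTensor.mk n t + MTensor.mk n' t :=
  congrArg QuotientAddGroup.mk (TensorProduct.tmul_add t n n')

theorem MTensor.mk_smul_right (s : S) (n : F) (t : X) :
    (MTensor.mk n (s • t) : MTensor S F X) = MTensor.mk (op s • n) t :=
  QuotientAddGroup.eq_iff_sub_mem.2 (AddSubgroup.subset_closure ⟨s, t, n, rfl⟩)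

theorem MTensor.induction {p : MTensor S F X → Prop} (z : MTensor S F X)
    (mk : ∀ n t, p (MTensor.mk n t)) (add : ∀ a b, p a → p b → p (a + b)) : p z := by
  induction z using QuotientAddGroup.induction_on with
  | H z =>
    induction z using TensorProduct.induction_on with
    | zero => simpa [MTensor.mk] using mk 0 0
    | tmul t n => exact mk n t
    | add a b ha hb => exact add _ _ ha hb

theorem MTensor.exists_eq_sum_mk (z : MTensor S F X) :
    ∃ (k : ℕ) (x : Fin k → F) (t : Fin k → X), z = ∑ i, MTensor.mk (x i) (t i) := by
  induction z using MTensor.induction with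
  | mk n t => exact ⟨1, fun _ => n, fun _ => t, by simp⟩
  | add a b ha hb =>
    obtain ⟨k, x, t, rfl⟩ := ha
    obtain ⟨l, y, v, rfl⟩ := hb
    exact ⟨k + l, Fin.append x y, Fin.append t v, by simp [Fin.sum_univ_add]⟩

/-- The character of `F ⊗_S X` induced by a map `X → F⋆` (one half of the tensor-hom
adjunction). -/
def MTensor.uncurry (f : X →ₗ[S] CharacterModule F) : CharacterModule (MTensor S F X) :=
  QuotientAddGroup.lift (mtRel S F X)
    (TensorProduct.liftAddHom (f.toAddMonoidHom : X →+ F →+ AddCircle (1 : ℚ))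
      fun z t n => (DFunLike.congr_fun (map_zsmul f z t) n).trans (map_zsmul (f t) z n).symm)
    ((AddSubgroup.closure_le _).2 <| by
      rintro _ ⟨s, t, n, rfl⟩
      exact (map_sub _ _ _).trans (sub_eq_zero.2 (DFunLike.congr_fun (map_smul f s t) n)))

@[simp] theorem MTensor.uncurry_mk (f : X →ₗ[S] CharacterModule F) (n : F) (t : X) :
    MTensor.uncurry f (MTensor.mk n t) = f t n :=
  rfl

/-- The map `X → F⋆` corresponding to a character of `F ⊗_S X` (the other half of the tensor-hom
adjunction). -/
def MTensor.curry (χ : CharacterModule (MTensor S F X)) : X →ₗ[S] CharacterModule F where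
  toFun t := χ.comp (AddMonoidHom.mk' (MTensor.mk · t) fun n n' => MTensor.mk_add_left_s6 n n' t)
  map_add' t t' := DFunLike.ext _ _ fun n =>
    (congrArg χ (MTensor.mk_add_right n t t')).trans (map_add χ _ _)
  map_smul' s t := DFunLike.ext _ _ fun n => congrArg χ (MTensor.mk_smul_right s n t)

@[simp] theorem MTensor.lmap_mk (g : X →ₗ[S] Y) (n : F) (t : X) :
    MTensor.lmap g (MTensor.mk n t) = MTensor.mk n (g t) :=
  rfl

/-! ## Flatness and injectivity of the character module -/

theorem exists_extension_of_lmap_injective {g : X →ₗ[S] Y}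
    (hg : Injective (MTensor.lmap (N := F) g)) (f : X →ₗ[S] CharacterModule F) :
    ∃ h : Y →ₗ[S] CharacterModule F, ∀ x, h (g x) = f x := by
  obtain ⟨χ, hχ⟩ := CharacterModule.dual_surjective_of_injective
    (MTensor.lmap (N := F) g).toIntLinearMap hg (MTensor.uncurry f)
  exact ⟨MTensor.curry χ, fun x => DFunLike.ext _ _ fun n =>
    DFunLike.congr_fun hχ (MTensor.mk n x)⟩

theorem lmap_injective_of_forall_exists_extension {g : X →ₗ[S] Y}
    (hg : ∀ f : X →ₗ[S] CharacterModule F, ∃ h : Y →ₗ[S] CharacterModule F, ∀ x, h (g x) = f x) :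
    Injective (MTensor.lmap (N := F) g) := by
  refine (injective_iff_map_eq_zero _).2 fun z hz =>
    CharacterModule.eq_zero_of_character_apply fun χ => ?_
  obtain ⟨h, hh⟩ := hg (MTensor.curry χ)
  have hχ (w : MTensor S F X) : MTensor.uncurry h (MTensor.lmap g w) = χ w := by
    induction w using MTensor.induction with
    | mk n t => exact DFunLike.congr_fun (hh t) n
    | add a b ha hb => rw [map_add, map_add, map_add, ha, hb]
  rw [← hχ, hz, map_zero]

theorem isFlatRightModule_iff_injective_characterModule :
    IsFlatRightModule S F ↔ Module.Injective S (CharacterModule F) :=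
  ⟨fun hF => ⟨fun X Y _ _ _ _ g hg => exists_extension_of_lmap_injective (hF X Y g hg)⟩,
    fun hF _ _ _ _ _ _ g hg => lmap_injective_of_forall_exists_extension (hF.out g hg)⟩

theorem isFlatRightModule_of_forall_ideal
    (hF : ∀ I : Ideal S, Injective (MTensor.lmap (N := F) (Submodule.subtype I))) :
    IsFlatRightModule S F := by
  refine isFlatRightModule_iff_injective_characterModule.2 (Module.Baer.injective fun I f => ?_)
  obtain ⟨h, hh⟩ := exists_extension_of_lmap_injective (hF I) f
  exact ⟨h, fun s hs => hh ⟨s, hs⟩⟩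

end Character

theorem injective_of_retract {A Q E : Type u} [Ring A] [AddCommGroup Q] [Module A Q]
    [AddCommGroup E] [Module A E] (hE : Module.Injective A E) {i : Q →ₗ[A] E} {r : E →ₗ[A] Q}
    (hri : r ∘ₗ i = LinearMap.id) : Module.Injective A Q where
  out X Y _ _ _ _ g hg f := by
    obtain ⟨h, hh⟩ := hE.out g hg (i ∘ₗ f)
    exact ⟨r ∘ₗ h, fun x => by simpa [hh] using LinearMap.congr_fun hri (f x)⟩

section Kernel

variable {S : Type u} [Ring S]
variable {F G : Type u} [AddCommGroup F] [Module Sᵐᵒᵖ F] [AddCommGroup G] [Module Sᵐᵒᵖ G]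

/-- The `S`-linear map on character modules induced by a map of right `S`-modules. -/
def characterMap (f : F →ₗ[Sᵐᵒᵖ] G) : CharacterModule G →ₗ[S] CharacterModule F where
  toFun χ := χ.comp f.toAddMonoidHom
  map_add' _ _ := rfl
  map_smul' s χ := DFunLike.ext _ _ fun n => congrArg χ (map_smul f (op s) n).symm

theorem characterMap_injective {f : F →ₗ[Sᵐᵒᵖ] G} (hf : Surjective f) :
    Injective (characterMap f) := fun _ _ h =>
  DFunLike.ext _ _ (hf.forall.2 (DFunLike.congr_fun h))

theorem characterMap_surjective {f : F →ₗ[Sᵐᵒᵖ] G} (hf : Injective f) :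
    Surjective (characterMap f) :=
  CharacterModule.dual_surjective_of_injective f.toAddMonoidHom.toIntLinearMap hf

theorem characterMap_exact {E : Type u} [AddCommGroup E] [Module Sᵐᵒᵖ E] {f : E →ₗ[Sᵐᵒᵖ] F}
    {g : F →ₗ[Sᵐᵒᵖ] G} (h : Exact f g) (hg : Surjective g) :
    Exact (characterMap (S := S) g) (characterMap f) := by
  intro χ
  constructor
  · intro hχ
    have hker : g.toAddMonoidHom.ker ≤ AddMonoidHom.ker χ := fun n hn => by
      obtain ⟨m, rfl⟩ := (h n).1 hn
      exact DFunLike.congr_fun hχ m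
    exact ⟨g.toAddMonoidHom.liftOfSurjective hg ⟨χ, hker⟩, DFunLike.ext _ _ fun n =>
      AddMonoidHom.liftOfRightInverse_comp_apply _ _ (rightInverse_surjInv hg) _ n⟩
  · rintro ⟨χ, rfl⟩
    exact DFunLike.ext _ _ fun m => (congrArg χ (h.apply_apply_eq_zero m)).trans (map_zero χ)

theorem IsFlatRightModule.ker (hF : IsFlatRightModule S F) (hG : IsFlatRightModule S G)
    (π : F →ₗ[Sᵐᵒᵖ] G) (hπ : Surjective π) : IsFlatRightModule S (LinearMap.ker π) := by
  rw [isFlatRightModule_iff_injective_characterModule] at *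
  obtain ⟨r, hr⟩ := hG.out (characterMap π) (characterMap_injective hπ) LinearMap.id
  have hexact := characterMap_exact (S := S) π.exact_subtype_ker_map hπ
  have hsurj := characterMap_surjective (S := S) (LinearMap.ker π).injective_subtype
  obtain ⟨-, i, hi⟩ := (hexact.split_tfae'.out 1 0 rfl rfl).1 ⟨hsurj, r, LinearMap.ext hr⟩
  exact injective_of_retract hF hi

end Kernel

/-! ## The equational criterion for flatness -/

theorem mem_of_forall_character {A : Type*} [AddCommGroup A] {M : AddSubgroup A} {a : A}
    (h : ∀ χ : CharacterModule A, (∀ m ∈ M, χ m = 0) → χ a = 0) : a ∈ M := by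
  refine (QuotientAddGroup.eq_zero_iff a).1
    (CharacterModule.eq_zero_of_character_apply fun χ => ?_)
  refine h (AddMonoidHom.comp χ (QuotientAddGroup.mk' M)) fun m hm => ?_
  exact (congrArg χ ((QuotientAddGroup.eq_zero_iff m).2 hm)).trans (map_zero χ)

theorem exists_comp_eq_of_ker_le_ker {A E M M' : Type*} [Ring A] [AddCommGroup E] [Module A E]
    [AddCommGroup M] [Module A M] [AddCommGroup M'] [Module A M'] (hE : Module.Baer A E)
    {φ : M →ₗ[A] M'} {ψ : M →ₗ[A] E} (h : LinearMap.ker φ ≤ LinearMap.ker ψ) :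
    ∃ χ : M' →ₗ[A] E, χ ∘ₗ φ = ψ := by
  obtain ⟨χ, hχ⟩ := hE.extension_property (φ.ker.liftQ φ le_rfl)
    (LinearMap.ker_eq_bot.1 (φ.ker.ker_liftQ_eq_bot φ le_rfl le_rfl)) (φ.ker.liftQ ψ h)
  exact ⟨χ, LinearMap.ext fun m => LinearMap.congr_fun hχ (Submodule.Quotient.mk m)⟩

section Equational

variable {S : Type u} [Ring S]
variable {F : Type u} [AddCommGroup F] [Module Sᵐᵒᵖ F]

theorem IsFlatRightModule.exists_eq_sum_smul (hF : IsFlatRightModule S F)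
    {ι κ : Type*} [Fintype ι] [Fintype κ] {s : ι → S} {b : κ → ι → S}
    (hb : LinearMap.ker (Fintype.linearCombination S s) ≤ Submodule.span S (Set.range b))
    {x : ι → F} (hx : ∑ i, op (s i) • x i = 0) :
    ∃ y : κ → F, ∀ i, x i = ∑ j, op (b j i) • y j := by
  classical
  let M : AddSubgroup (ι → F) :=
    (AddMonoidHom.mk' (fun (y : κ → F) i => ∑ j, op (b j i) • y j)
      fun y y' => by ext; simp [Finset.sum_add_distrib]).range
  suffices hxM : x ∈ M by
    obtain ⟨y, rfl⟩ := hxM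
    exact ⟨y, fun i => rfl⟩
  -- A character `χ = (θᵢ)` vanishing on `M` turns the relations among the `sᵢ` into relations among
  -- the `θᵢ`, so injectivity of `F⋆` yields `θᵢ = sᵢ • ψ 1` and hence `χ x = ψ 1 (∑ xᵢ sᵢ) = 0`.
  refine mem_of_forall_character fun χ hχ => ?_
  let θ (i : ι) : CharacterModule F := AddMonoidHom.comp χ (AddMonoidHom.single (fun _ => F) i)
  have hθ (x : ι → F) : χ x = ∑ i, θ i (x i) := by
    conv_lhs => rw [← Finset.univ_sum_single x, map_sum]
    rfl
  have hker : LinearMap.ker (Fintype.linearCombination S s) ≤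
      LinearMap.ker (Fintype.linearCombination S θ) := by
    refine hb.trans (Submodule.span_le.2 ?_)
    rintro _ ⟨j, rfl⟩
    refine DFunLike.ext _ _ fun n => ?_
    have := hχ (fun i => op (b j i) • n) ⟨Pi.single j n, by ext i; simp [Pi.single_apply]⟩
    simpa [hθ, Fintype.linearCombination_apply] using this
  obtain ⟨ψ, hψ⟩ := exists_comp_eq_of_ker_le_ker
    (Module.Baer.of_injective (isFlatRightModule_iff_injective_characterModule.1 hF)) hker
  have hs (i : ι) : θ i = s i • ψ 1 := by
    simpa [Fintype.linearCombination_apply_single, ← map_smul] using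
      (LinearMap.congr_fun hψ (Pi.single i 1)).symm
  calc χ x = ∑ i, ψ 1 (op (s i) • x i) := by simp [hθ, hs]
    _ = 0 := by rw [← map_sum, hx, map_zero]

theorem isFlatRightModule_of_forall_relation
    (hF : ∀ (n : ℕ) (s : Fin n → S) (x : Fin n → F), ∑ i, op (s i) • x i = 0 →
      ∃ (κ : Type*) (_ : Fintype κ) (b : κ → Fin n → S) (y : κ → F),
        (∀ j, ∑ i, b j i * s i = 0) ∧ ∀ i, x i = ∑ j, op (b j i) • y j) :
    IsFlatRightModule S F := by
  refine isFlatRightModule_of_forall_ideal fun I => (injective_iff_map_eq_zero _).2 fun z hz => ?_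
  obtain ⟨n, x, t, rfl⟩ := MTensor.exists_eq_sum_mk z
  have hrel : ∑ i, op (t i : S) • x i = 0 := by
    refine CharacterModule.eq_zero_of_character_apply fun χ => ?_
    simpa using congrArg (MTensor.uncurry (LinearMap.toSpanSingleton S _ χ)) hz
  obtain ⟨κ, _, b, y, hb, hy⟩ := hF n (fun i => t i) x hrel
  have hbt (j : κ) : ∑ i, b j i • t i = 0 := Subtype.ext (by simpa using hb j)
  refine CharacterModule.eq_zero_of_character_apply fun χ => ?_
  calc χ (∑ i, MTensor.mk (x i) (t i))
      = ∑ i, MTensor.curry χ (t i) (x i) := map_sum χ _ _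
    _ = ∑ i, ∑ j, MTensor.curry χ (t i) (op (b j i) • y j) := by simp only [hy, map_sum]
    _ = ∑ j, MTensor.curry χ (∑ i, b j i • t i) (y j) := by
      rw [Finset.sum_comm]
      simp only [map_sum, map_smul, characterModule_sum_apply, characterModule_smul_apply]
    _ = 0 := by simp only [hbt, map_zero, characterModule_zero_apply, Finset.sum_const_zero]

theorem isFlatRightModule_finsupp (I : Type u) : IsFlatRightModule S (I →₀ Sᵐᵒᵖ) := by
  classical
  refine isFlatRightModule_of_forall_relation fun n s x hx => ?_
  let J : Finset I := Finset.univ.biUnion fun i => (x i).support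
  refine ⟨J, inferInstance, fun j i => (x i j.1).unop, fun j => Finsupp.single j.1 1, fun j => ?_,
    fun i => ?_⟩
  · simpa [Finsupp.finsetSum_apply] using congrArg unop (DFunLike.congr_fun hx j.1)
  · have hJ : (x i).support ⊆ J :=
      Finset.subset_biUnion_of_mem (fun i => (x i).support) (Finset.mem_univ i)
    calc x i = (x i).sum Finsupp.single := (x i).sum_single.symm
      _ = ∑ a ∈ J, Finsupp.single a (x i a) :=
        Finsupp.sum_of_support_subset _ hJ _ fun _ _ => Finsupp.single_zero _
      _ = ∑ j : J, op (x i j).unop • Finsupp.single j.1 1 := by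
        rw [← Finset.sum_coe_sort]
        simp

theorem isFlatRightModule_pi (hS : IsLeftCoherentRing S) {Λ : Type u} {F : Λ → Type u}
    [∀ l, AddCommGroup (F l)] [∀ l, Module Sᵐᵒᵖ (F l)]
    (hF : ∀ l, IsFlatRightModule S (F l)) : IsFlatRightModule S (∀ l, F l) := by
  refine isFlatRightModule_of_forall_relation fun n s x hx => ?_
  let φ : (Fin n → S) →ₗ[S] S := Fintype.linearCombination S s
  have hrange : φ.range.FG := LinearMap.range_eq_map φ ▸ Module.Finite.fg_top.map φ
  have := hS _ hrange
  have hker : φ.ker.FG :=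
    LinearMap.ker_rangeRestrict φ ▸ Module.FinitePresentation.fg_ker _ φ.surjective_rangeRestrict
  obtain ⟨T, hT⟩ := hker
  have hrel (l : Λ) : ∑ i, op (s i) • x i l = 0 := by simpa using congrFun hx l
  choose y hy using fun l => (hF l).exists_eq_sum_smul (b := ((↑) : T → Fin n → S))
    (by simp [φ, hT]) (hrel l)
  refine ⟨T, inferInstance, (↑), fun j l => y l j, fun j => ?_, fun i => funext fun l => ?_⟩
  · have : j.1 ∈ φ.ker := hT ▸ Submodule.subset_span j.2
    simpa [φ, Fintype.linearCombination_apply] using this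
  · simp [hy]

end Equational

/-! ## Lifting along surjections -/

section LeftExact

variable {A X Y Z E : Type*} [Ring A] [AddCommGroup X] [Module A X] [AddCommGroup Y] [Module A Y]
variable [AddCommGroup Z] [Module A Z] [AddCommGroup E] [Module A E]

theorem exists_comp_eq_of_exact_of_surjective {f : X →ₗ[A] Y} {g : Y →ₗ[A] Z}
    (hfg : Exact f g) (hg : Surjective g) {k : Y →ₗ[A] E} (hk : k ∘ₗ f = 0) :
    ∃ s : Z →ₗ[A] E, s ∘ₗ g = k := by
  refine ⟨f.range.liftQ k (LinearMap.range_le_ker_iff.2 hk) ∘ₗ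
    (hfg.linearEquivOfSurjective hg).symm.toLinearMap, ?_⟩
  ext x
  simp

theorem exists_comp_eq_of_exact_of_injective {f : X →ₗ[A] Y} {g : Y →ₗ[A] Z}
    (hfg : Exact f g) (hf : Injective f) {k : E →ₗ[A] Y} (hk : g ∘ₗ k = 0) :
    ∃ s : E →ₗ[A] X, f ∘ₗ s = k := by
  refine ⟨(LinearEquiv.ofInjective f hf).symm.toLinearMap ∘ₗ
    k.codRestrict f.range fun e => (hfg _).1 (LinearMap.congr_fun hk e), ?_⟩
  ext e
  exact congrArg Subtype.val ((LinearEquiv.ofInjective f hf).apply_symm_apply _)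

end LeftExact

section Ext

variable {A : Type u} [Ring A] {N L E : Type u} [AddCommGroup N] [Module A N]
variable [AddCommGroup L] [Module A L] [AddCommGroup E] [Module A E]

theorem ExtVanishAll.ext1Vanishes (h : ExtVanishAll A N L) : Ext1Vanishes A N L := by
  intro E _ _ i p hi hp hip
  obtain ⟨Q, hQ, hex⟩ := h
  have := hQ.proj 0
  obtain ⟨a, ha⟩ := Module.projective_lifting_property p Q.ε hp
  obtain ⟨b, hb⟩ : ∃ b : Q.P 1 →ₗ[A] L, i ∘ₗ b = a ∘ₗ Q.d 0 :=
    exists_comp_eq_of_exact_of_injective hip hi <| by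
      rw [← LinearMap.comp_assoc, ha, hQ.exact0.linearMap_comp_eq_zero]
  have hbd : b ∘ₗ Q.d 1 = 0 := by
    rw [← LinearMap.cancel_left hi, ← LinearMap.comp_assoc, hb, LinearMap.comp_assoc,
      (hQ.exactSucc 0).linearMap_comp_eq_zero, LinearMap.comp_zero, LinearMap.comp_zero]
  obtain ⟨c, rfl⟩ := (hex 0 b).1 hbd
  obtain ⟨s, hs⟩ := exists_comp_eq_of_exact_of_surjective hQ.exact0 hQ.surj
    (k := a - i ∘ₗ c) (by rw [LinearMap.sub_comp, ← hb, LinearMap.comp_assoc, sub_self])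
  refine ⟨s, (LinearMap.cancel_right hQ.surj).1 ?_⟩
  calc (p ∘ₗ s) ∘ₗ Q.ε = p ∘ₗ a - (p ∘ₗ i) ∘ₗ c := by
        rw [LinearMap.comp_assoc, hs, LinearMap.comp_sub, LinearMap.comp_assoc]
    _ = LinearMap.id ∘ₗ Q.ε := by
        rw [ha, hip.linearMap_comp_eq_zero, LinearMap.zero_comp, sub_zero, LinearMap.id_comp]

theorem Ext1Vanishes.exists_lift {p : E →ₗ[A] L} (hp : Surjective p)
    (h : Ext1Vanishes A N (LinearMap.ker p)) (g : N →ₗ[A] L) : ∃ g' : N →ₗ[A] E, p ∘ₗ g' = g := by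
  let W := LinearMap.eqLocus (p ∘ₗ LinearMap.fst A E N) (g ∘ₗ LinearMap.snd A E N)
  let i : LinearMap.ker p →ₗ[A] W :=
    (LinearMap.inl A E N ∘ₗ p.ker.subtype).codRestrict W fun e => by simp [W]
  let π : W →ₗ[A] N := LinearMap.snd A E N ∘ₗ W.subtype
  have hπ : Surjective π := fun n => by
    obtain ⟨e, he⟩ := hp (g n)
    exact ⟨⟨(e, n), he⟩, rfl⟩
  have hi : Injective i := fun e e' hee' =>
    Subtype.ext (congrArg (fun w : W => w.1.1) hee')
  have hiπ : Exact i π := by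
    rintro ⟨⟨e, n⟩, hen : p e = g n⟩
    constructor
    · rintro (rfl : n = 0)
      exact ⟨⟨e, hen.trans (map_zero g)⟩, rfl⟩
    · rintro ⟨e', he'⟩
      exact (congrArg (fun w : W => w.1.2) he').symm
  obtain ⟨s, hs⟩ := h W i π hi hπ hiπ
  refine ⟨LinearMap.fst A E N ∘ₗ W.subtype ∘ₗ s, LinearMap.ext fun n => ?_⟩
  exact (s n).2.trans (congrArg g (LinearMap.congr_fun hs n))

end Ext

/-! ## Bounding free modules -/

theorem mapDomain_mapDomain_invFun {K I M : Type*} [Nonempty K] [AddCommMonoid M] {h : K → I}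
    {l : I →₀ M} (hl : (l.support : Set I) ⊆ Set.range h) :
    Finsupp.mapDomain h (Finsupp.mapDomain (invFun h) l) = l := by
  rw [← Finsupp.mapDomain_comp]
  exact (Finsupp.mapDomain_congr fun i hi => invFun_eq (hl hi)).trans Finsupp.mapDomain_id

theorem exists_factor_finsupp_prod_nat {A N I : Type*} [Semiring A] [AddCommMonoid N] [Module A N]
    (φ : N →ₗ[A] (I →₀ A)) :
    ∃ (α : N →ₗ[A] (N × ℕ →₀ A)) (β : (N × ℕ →₀ A) →ₗ[A] (I →₀ A)), β ∘ₗ α = φ := by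
  cases isEmpty_or_nonempty I with
  | inl => exact ⟨0, 0, LinearMap.ext fun n => Subsingleton.elim _ _⟩
  | inr hI =>
    have hcount (n : N) := (φ n).support.countable_toSet
    let h (x : N × ℕ) : I := Set.enumerateCountable (hcount x.1) hI.some x.2
    refine ⟨Finsupp.lmapDomain A A (invFun h) ∘ₗ φ, Finsupp.lmapDomain A A h,
      LinearMap.ext fun n => mapDomain_mapDomain_invFun fun i hi => ?_⟩
    obtain ⟨k, hk⟩ := Set.subset_range_enumerate (hcount n) hI.some hi
    exact ⟨(n, k), hk⟩

section Factor

variable {S : Type u} [Ring S] {N : Type u} [AddCommGroup N] [Module Sᵐᵒᵖ N]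

theorem IsFlatRightModule.exists_lift_finsupp {F : Type u} [AddCommGroup F] [Module Sᵐᵒᵖ F]
    (hF : IsFlatRightModule S F)
    (hN : ∀ (K : Type u) [AddCommGroup K] [Module Sᵐᵒᵖ K], IsFlatRightModule S K →
      Ext1Vanishes Sᵐᵒᵖ N K) (g : N →ₗ[Sᵐᵒᵖ] F) :
    ∃ g' : N →ₗ[Sᵐᵒᵖ] (F →₀ Sᵐᵒᵖ), Finsupp.linearCombination Sᵐᵒᵖ id ∘ₗ g' = g :=
  have hsurj := Finsupp.linearCombination_id_surjective Sᵐᵒᵖ F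
  (hN _ ((isFlatRightModule_finsupp F).ker hF _ hsurj)).exists_lift hsurj g

theorem FlatDimLE.exists_factor_flat {L : Type u} [AddCommGroup L] [Module Sᵐᵒᵖ L] {n : ℕ}
    (hL : FlatDimLE S L n)
    (hN : ∀ (K : Type u) [AddCommGroup K] [Module Sᵐᵒᵖ K], (∃ m, FlatDimLE S K m) →
      Ext1Vanishes Sᵐᵒᵖ N K) (g : N →ₗ[Sᵐᵒᵖ] L) :
    ∃ (F : ModuleCat.{u} Sᵐᵒᵖ) (g' : N →ₗ[Sᵐᵒᵖ] F) (q : F →ₗ[Sᵐᵒᵖ] L),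
      IsFlatRightModule S F ∧ q ∘ₗ g' = g := by
  cases n with
  | zero => exact ⟨ModuleCat.of Sᵐᵒᵖ L, g, LinearMap.id, hL, rfl⟩
  | succ n =>
    obtain ⟨e, he, hker⟩ := hL
    obtain ⟨g', hg'⟩ := (hN (LinearMap.ker e.f) ⟨n, hker⟩).exists_lift e.surj g
    exact ⟨e.P, g', e.f, he, hg'⟩

theorem FlatDimLE.exists_factor_finsupp_prod_nat {L : Type u} [AddCommGroup L] [Module Sᵐᵒᵖ L]
    {n : ℕ} (hL : FlatDimLE S L n)
    (hN : ∀ (K : Type u) [AddCommGroup K] [Module Sᵐᵒᵖ K], (∃ m, FlatDimLE S K m) →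
      Ext1Vanishes Sᵐᵒᵖ N K) (g : N →ₗ[Sᵐᵒᵖ] L) :
    ∃ (α : N →ₗ[Sᵐᵒᵖ] (N × ℕ →₀ Sᵐᵒᵖ)) (β : (N × ℕ →₀ Sᵐᵒᵖ) →ₗ[Sᵐᵒᵖ] L), β ∘ₗ α = g := by
  obtain ⟨F, g₁, q, hF, rfl⟩ := hL.exists_factor_flat hN g
  obtain ⟨g₂, rfl⟩ := hF.exists_lift_finsupp (fun K _ _ hK => hN K ⟨0, hK⟩) g₁
  obtain ⟨α, β, rfl⟩ := _root_.exists_factor_finsupp_prod_nat g₂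
  exact ⟨α, q ∘ₗ Finsupp.linearCombination Sᵐᵒᵖ id ∘ₗ β, rfl⟩

end Factor

theorem exists_projective_preenvelope_of_ext_vanishing_general
    (S : Type u) [Ring S] (hScoh : IsLeftCoherentRing S)
    (N : Type u) [AddCommGroup N] [Module Sᵐᵒᵖ N]
    (hext : ∀ (L : Type u) [AddCommGroup L] [Module Sᵐᵒᵖ L],
      (∃ n, FlatDimLE S L n) → Ext1Vanishes Sᵐᵒᵖ N L) :
    ∃ (P : ModuleCat.{u} Sᵐᵒᵖ) (f : N →ₗ[Sᵐᵒᵖ] P),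
      Module.Projective Sᵐᵒᵖ P ∧ (∃ n, FlatDimLE S P n) ∧
      ∀ (L : Type u) [AddCommGroup L] [Module Sᵐᵒᵖ L], (∃ n, FlatDimLE S L n) →
        ∀ g : N →ₗ[Sᵐᵒᵖ] L, ∃ h : (P : Type u) →ₗ[Sᵐᵒᵖ] L, h.comp f = g := by
  let C : Type u := N × ℕ →₀ Sᵐᵒᵖ
  let D : Type u := (N →ₗ[Sᵐᵒᵖ] C) → C
  have hD : IsFlatRightModule S D :=
    isFlatRightModule_pi hScoh fun _ => isFlatRightModule_finsupp (N × ℕ)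
  obtain ⟨f, hf⟩ := hD.exists_lift_finsupp (fun K _ _ hK => hext K ⟨0, hK⟩)
    (LinearMap.pi fun α : N →ₗ[Sᵐᵒᵖ] C => α)
  refine ⟨ModuleCat.of Sᵐᵒᵖ (D →₀ Sᵐᵒᵖ), f, inferInstanceAs (Module.Projective Sᵐᵒᵖ (D →₀ Sᵐᵒᵖ)),
    ⟨0, isFlatRightModule_finsupp D⟩, ?_⟩
  rintro L _ _ ⟨n, hL⟩ g
  obtain ⟨α, β, rfl⟩ := hL.exists_factor_finsupp_prod_nat hext g
  refine ⟨β ∘ₗ LinearMap.proj α ∘ₗ Finsupp.linearCombination Sᵐᵒᵖ id, LinearMap.ext fun x => ?_⟩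
  exact congrArg β (congrFun (LinearMap.congr_fun hf x) α)

/-- Let `S` be a left coherent ring and `N` a right `S`-module, and let `ℒ`
be the class of right `S`-modules of finite flat dimension. If `Ext^{i≥1}_S(N, L) = 0` for
all `L ∈ ℒ` then `N` has an `ℒ`-preenvelope `f : N → P` with `P` projective. -/
theorem exists_projective_preenvelope_of_ext_vanishing
    (S : Type u) [Ring S] (hScoh : IsLeftCoherentRing S)
    (N : Type u) [AddCommGroup N] [Module Sᵐᵒᵖ N]
    (hext : ∀ (L : Type u) [AddCommGroup L] [Module Sᵐᵒᵖ L],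
      (∃ n, FlatDimLE S L n) → ExtVanishAll Sᵐᵒᵖ N L) :
    ∃ (P : ModuleCat.{u} Sᵐᵒᵖ) (f : N →ₗ[Sᵐᵒᵖ] P),
      Module.Projective Sᵐᵒᵖ P ∧ (∃ n, FlatDimLE S P n) ∧
      ∀ (L : Type u) [AddCommGroup L] [Module Sᵐᵒᵖ L], (∃ n, FlatDimLE S L n) →
        ∀ g : N →ₗ[Sᵐᵒᵖ] L, ∃ h : (P : Type u) →ₗ[Sᵐᵒᵖ] L, h.comp f = g :=
  exists_projective_preenvelope_of_ext_vanishing_general S hScoh N fun L _ _ hL =>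
    (hext L hL).ext1Vanishes
end
end
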